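/- The second cohomology of the Melikian algebra with values in the adjoint representation is 5-dimensional: H²(M, M) = ⟨Sq(1)⟩ ⊕ ⟨Sq(D₁)⟩ ⊕ ⟨Sq(D₂)⟩ ⊕ ⟨Sq(D̃₁)⟩ ⊕ ⟨Sq(D̃₂)⟩. -/

import Mathlib

open scoped BigOperators

namespace Melikian

/-- Index set for monomials in the truncated polynomial algebra
`A(2) = F[x₁,x₂]/(x₁⁵,x₂⁵)`. -/
abbrev Idx : Type := Fin 5 × Fin 5

/-- The truncated polynomial algebra `A(2)`, as functions on monomial exponents. -/
abbrev A (F : Type*) [Field F] : Type _ := Idx → F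

variable {F : Type*} [Field F]

/-- The monomial `x^b = x₁^{b₁} x₂^{b₂}`. -/
def X (b : Idx) : A F := fun a => if a = b then 1 else 0

/-- Truncated multiplication of `A(2)`. -/
def mulA (f g : A F) : A F := fun a =>
  ∑ b : Idx, ∑ c : Idx,
    if b.1.val + c.1.val = a.1.val ∧ b.2.val + c.2.val = a.2.val then f b * g c else 0

/-- Partial derivative `∂/∂x₁` on `A(2)`. -/
def d1 (f : A F) : A F := fun a =>
  if h : a.1.val + 1 < 5 then ((a.1.val + 1 : ℕ) : F) * f (⟨a.1.val + 1, h⟩, a.2) else 0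

/-- Partial derivative `∂/∂x₂` on `A(2)`. -/
def d2 (f : A F) : A F := fun a =>
  if h : a.2.val + 1 < 5 then ((a.2.val + 1 : ℕ) : F) * f (a.1, ⟨a.2.val + 1, h⟩) else 0

/-- The Witt–Jacobson algebra `W(2)` as a free `A(2)`-module with basis `D₁, D₂`:
an element `(f₁, f₂)` stands for `f₁D₁ + f₂D₂`. -/
abbrev W (F : Type*) [Field F] : Type _ := A F × A F

/-- Action of a derivation `D = f₁D₁+f₂D₂ ∈ W(2)` on `A(2)`. -/
def Dw (D : W F) (g : A F) : A F := mulA D.1 (d1 g) + mulA D.2 (d2 g)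

/-- Divergence `div(f₁D₁+f₂D₂) = D₁(f₁) + D₂(f₂)`. -/
def divW (D : W F) : A F := d1 D.1 + d2 D.2

/-- The usual bracket of `W(2)`. -/
def brW (D E : W F) : W F := (Dw D E.1 - Dw E D.1, Dw D E.2 - Dw E D.2)

/-- Multiplication of an element of `W(2)` by a truncated polynomial. -/
def smulA (f : A F) (D : W F) : W F := (mulA f D.1, mulA f D.2)

/-- The Melikian algebra `M = A(2) ⊕ W(2) ⊕ W(2)~` as an `F`-vector space. -/
abbrev Mel (F : Type*) [Field F] : Type _ := A F × W F × W F

/-- Inclusion of `A(2)` into `M`. -/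
def ιA (f : A F) : Mel F := (f, 0, 0)

/-- Inclusion of `W(2)` into `M`. -/
def ιW (D : W F) : Mel F := (0, D, 0)

/-- Inclusion of the second copy `W(2)~` into `M`, `D ↦ D̃`. -/
def ιT (D : W F) : Mel F := (0, 0, D)

/-- The Melikian bracket on `M = A(2) ⊕ W(2) ⊕ W(2)~`, defined by the rules
`[D,Ẽ] = [D,E]~ + 2 div(D) Ẽ`, `[D,f] = D(f) − 2 div(D) f`,
`[f₁D̃₁+f₂D̃₂, g₁D̃₁+g₂D̃₂] = f₁g₂ − f₂g₁`, `[f,Ẽ] = fE`,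
`[f,g] = 2(gD₂(f) − fD₂(g))D̃₁ + 2(fD₁(g) − gD₁(f))D̃₂`,
extended bilinearly and antisymmetrically (with the standard bracket on `W(2)`). -/
def brM (u v : Mel F) : Mel F :=
  ( (Dw u.2.1 v.1 - (2 : F) • mulA (divW u.2.1) v.1)
      - (Dw v.2.1 u.1 - (2 : F) • mulA (divW v.2.1) u.1)
      + (mulA u.2.2.1 v.2.2.2 - mulA u.2.2.2 v.2.2.1)
  , brW u.2.1 v.2.1 + smulA u.1 v.2.2 - smulA v.1 u.2.2
  , (brW u.2.1 v.2.2 + (2 : F) • smulA (divW u.2.1) v.2.2)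
      - (brW v.2.1 u.2.2 + (2 : F) • smulA (divW v.2.1) u.2.2)
      + ((2 : F) • (mulA v.1 (d2 u.1) - mulA u.1 (d2 v.1)),
         (2 : F) • (mulA u.1 (d1 v.1) - mulA v.1 (d1 u.1))) )

/-- `x^b D_i` as an element of `W(2)` (`i = 0` stands for `D₁`, `i = 1` for `D₂`). -/
def wOf (i : Fin 2) (b : Idx) : W F := if i = 0 then (X b, 0) else (0, X b)

/-- The element `x₁D₁ ∈ M`. -/
def x1D1 : Mel F := ιW (X (1, 0), 0)

/-- The element `x₂D₂ ∈ M`. -/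
def x2D2 : Mel F := ιW (0, X (0, 1))

/-- The element `1 ∈ A(2) ⊂ M`. -/
def oneM : Mel F := ιA (X (0, 0))

/-- The element `D_{i+1} ∈ W(2) ⊂ M`. -/
def DD (i : Fin 2) : Mel F := ιW (wOf i (0, 0))

/-- The element `D̃_{i+1} ∈ W(2)~ ⊂ M`. -/
def TT (i : Fin 2) : Mel F := ιT (wOf i (0, 0))

/-- Total degree of a monomial exponent. -/
def degA (b : Idx) : ℤ := (b.1.val : ℤ) + (b.2.val : ℤ)

/-- The degree-`d` piece `M_d` of the `ℤ`-grading of the Melikian algebra: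
`deg_M(f) = 3 deg(f) − 2` on `A(2)`, `deg_M(x^bD_i) = 3(|b|−1)` on `W(2)`, and
`deg_M(x^bD̃_i) = 3(|b|−1)+2` on `W(2)~`. -/
def Md (d : ℤ) : Submodule F (Mel F) :=
  Submodule.span F
    ( {m | ∃ b : Idx, m = ιA (X b) ∧ d = 3 * degA b - 2}
      ∪ {m | ∃ b : Idx, ∃ i : Fin 2, m = ιW (wOf i b) ∧ d = 3 * (degA b - 1)}
      ∪ {m | ∃ b : Idx, ∃ i : Fin 2, m = ιT (wOf i b) ∧ d = 3 * (degA b - 1) + 2} )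

/-- The part `M_{≥ d}` of the Melikian algebra. -/
def Mge (d : ℤ) : Submodule F (Mel F) := ⨆ e : ℤ, ⨆ _ : d ≤ e, (Md e : Submodule F (Mel F))

/-- The squaring `Sq(γ)(x,y) = Σ_{k=1}^{4} [γ^k(x), γ^{5−k}(y)] / (k!(5−k)!)`
of an operator `γ` on the Melikian algebra (characteristic 5). -/
def melSq (γ : Mel F → Mel F) (x y : Mel F) : Mel F :=
  ∑ k ∈ Finset.Icc 1 4,
    ((Nat.factorial k * Nat.factorial (5 - k) : ℕ) : F)⁻¹ • brM (γ^[k] x) (γ^[5 - k] y)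

/-- The Chevalley–Eilenberg coboundary of a linear 1-cochain of `M` with values in the
adjoint representation. -/
def cob (g : Mel F →ₗ[F] Mel F) (x y : Mel F) : Mel F :=
  brM x (g y) - brM y (g x) - g (brM x y)

/-!
The elements `x₁D₁` and `x₂D₂` act torally. By Cartan's formula a Lie algebra acts on its cocycles
by coboundaries, so every cocycle is cohomologous to one of weight zero, that is, one invariant
under both.

Each weight space of this torus meets each of the five summands of `M` in a line, so a weight-zero
linear map or cochain has five coordinates at each monomial or pair of monomials. Many of the
relations given by the cocycle identity involve a single coordinate which is not yet known to
vanish. This shows, one coordinate after the other, that a weight-zero cocycle vanishes at all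
pairs containing `D̃₁`, `D̃₂` or `x₁x₂D₁` as soon as `625` chosen coordinates vanish. The elements
whose contraction with a cocycle vanishes form a subalgebra, and these three generate `M`, so the
cocycle is zero. In the same way a weight-zero derivation is zero as soon as `5` chosen coordinates
vanish.

The five squarings are weight-zero cocycles. For each of them there is a coordinate which vanishes
on all coboundaries and on the other four squarings, so they are independent modulo coboundaries.
The weight-zero linear maps have dimension `125 * 5 = 625`. Hence their coboundaries, of which there
are at least `625 - 5` dimensions, and the squarings fill the weight-zero cocycles, of which there
are at most `625` dimensions.
-/

open LieModule.Cohomology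

section Cochains

variable {R L M : Type*} [CommRing R] [LieRing L] [LieAlgebra R L] [AddCommGroup M] [Module R M]
  [LieRingModule L M] [LieModule R L M]

lemma d₁₂_mem_twoCocycle (g : oneCochain R L M) : d₁₂ R L M g ∈ twoCocycle R L M :=
  LinearMap.congr_fun (d₂₃_comp_d₁₂ R L M) g

lemma eq_zero_of_d₁₂_eq_zero {g : oneCochain R L M} (hg : d₁₂ R L M g = 0) {s : Set L}
    (hs : LieSubalgebra.lieSpan R L s = ⊤) (h : Set.EqOn g 0 s) : g = 0 := by
  let D : LieDerivation R L M :=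
    ⟨g, fun x y => (sub_eq_zero.1 ((d₁₂_apply_apply ..).symm.trans (by rw [hg]; rfl))).symm⟩
  exact congrArg LieDerivation.toLinearMap
    (LieDerivation.ext_of_lieSpan_eq_top (D1 := D) (D2 := 0) s hs h)

lemma mem_twoCocycle_iff_cyclic {f : twoCochain R L M} :
    f ∈ twoCocycle R L M ↔ ∀ x y z : L,
      (⁅x, f y z⁆ + f z ⁅x, y⁆) + (⁅y, f z x⁆ + f x ⁅y, z⁆) + (⁅z, f x y⁆ + f y ⁅z, x⁆) = 0 := by
  have key (x y z : L) : d₂₃ R L M f x y z =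
      (⁅x, f y z⁆ + f z ⁅x, y⁆) + (⁅y, f z x⁆ + f x ⁅y, z⁆) + (⁅z, f x y⁆ + f y ⁅z, x⁆) := by
    rw [d₂₃_apply, ← twoCochain_skew f z ⁅x, y⁆, ← twoCochain_skew f x ⁅y, z⁆,
      ← twoCochain_skew f z x, ← lie_skew x z, lie_neg, map_neg f,
      LinearMap.neg_apply, twoCochain_skew f _ y]
    abel
  simp only [mem_twoCocycle_iff, LinearMap.ext_iff, key, LinearMap.zero_apply]

lemma lie_d₁₂ (h : L) (g : oneCochain R L M) : ⁅h, (d₁₂ R L M g).1⁆ = (d₁₂ R L M ⁅h, g⁆).1 := by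
  ext x y
  simp only [LieHom.lie_apply, LinearMap.sub_apply, twoCochain_val_apply, d₁₂_apply_apply, lie_sub,
    leibniz_lie h x, leibniz_lie h y, map_add]
  abel

lemma lie_eq_d₁₂ {f : twoCochain R L M} (hf : f ∈ twoCocycle R L M) (h : L) :
    ⁅h, f.1⁆ = (d₁₂ R L M (f h)).1 := by
  ext x y
  have key := LinearMap.congr_fun₂ (LinearMap.congr_fun ((mem_twoCocycle_iff ..).1 hf) h) x y
  simp only [d₂₃_apply, LinearMap.zero_apply] at key
  simp only [LieHom.lie_apply, LinearMap.sub_apply, twoCochain_val_apply, d₁₂_apply_apply]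
  rw [← twoCochain_skew f ⁅h, y⁆ x, ← twoCochain_skew f ⁅x, y⁆ h, ← sub_eq_zero, ← key]
  abel

/-- The elements whose contraction with a cocycle vanishes. -/
def cocycleRadical (f : twoCochain R L M) (hf : f ∈ twoCocycle R L M) : LieSubalgebra R L where
  __ := LinearMap.ker f.1
  lie_mem' {x y} hx hy := by
    refine LinearMap.mem_ker.2 (LinearMap.ext fun z => ?_)
    have hx' (w : L) : f x w = 0 := LinearMap.congr_fun (LinearMap.mem_ker.1 hx) w
    have hy' (w : L) : f y w = 0 := LinearMap.congr_fun (LinearMap.mem_ker.1 hy) w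
    have key := LinearMap.congr_fun₂ (LinearMap.congr_fun ((mem_twoCocycle_iff ..).1 hf) x) y z
    rw [d₂₃_apply, hy', hx', hx', ← twoCochain_skew f y ⁅x, z⁆, ← twoCochain_skew f x ⁅y, z⁆,
      hx', hy'] at key
    simpa using key

lemma eq_zero_of_lieSpan_eq_top {f : twoCochain R L M} (hf : f ∈ twoCocycle R L M) {s : Set L}
    (hs : LieSubalgebra.lieSpan R L s = ⊤) (h : ∀ x ∈ s, ∀ y, f x y = 0) : f = 0 := by
  have key : LieSubalgebra.lieSpan R L s ≤ cocycleRadical f hf :=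
    LieSubalgebra.lieSpan_le.2 fun x hx => LinearMap.ext (h x hx)
  exact Subtype.ext (LinearMap.ext fun x => key (hs ▸ LieSubalgebra.mem_top x))

end Cochains

section Toral

variable {R L : Type*} (M : Type*) [CommRing R] [LieRing L] [LieAlgebra R L] [AddCommGroup M]
  [Module R M] [LieRingModule L M] [LieModule R L M] {p : ℕ}

/-- `h` acts on `M` as a toral element of a restricted Lie algebra with `h ^ [p] = h`. -/
def ActsTorally (R : Type*) {L : Type*} (M : Type*) [CommRing R] [LieRing L] [LieAlgebra R L]
    [AddCommGroup M] [Module R M] [LieRingModule L M] [LieModule R L M] (p : ℕ) (h : L) : Prop :=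
  LieModule.toEnd R L M h ^ p = LieModule.toEnd R L M h

variable {M} {N : Type*} [AddCommGroup N] [Module R N] [LieRingModule L N] [LieModule R L N]

lemma ActsTorally.linearMap [hp : Fact p.Prime] [CharP R p] {h : L} (hM : ActsTorally R M p h)
    (hN : ActsTorally R N p h) : ActsTorally R (M →ₗ[R] N) p h := by
  let post : Module.End R (M →ₗ[R] N) := (LinearMap.llcomp R M N N) (LieModule.toEnd R L N h)
  let pre : Module.End R (M →ₗ[R] N) :=
    (LinearMap.llcomp R M M N).flip (LieModule.toEnd R L M h)
  have hsub : LieModule.toEnd R L (M →ₗ[R] N) h = post - pre := by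
    ext f m
    simp [post, pre]
  have hcomm : Commute post pre := by
    ext f m
    simp [post, pre]
  have hpost (k : ℕ) (f : M →ₗ[R] N) : (post ^ k) f = ((LieModule.toEnd R L N h) ^ k) ∘ₗ f := by
    induction k with
    | zero => rfl
    | succ k ih => rw [pow_succ', Module.End.mul_apply, ih, pow_succ']; rfl
  have hpre (k : ℕ) (f : M →ₗ[R] N) : (pre ^ k) f = f ∘ₗ ((LieModule.toEnd R L M h) ^ k) := by
    induction k with
    | zero => rfl
    | succ k ih => rw [pow_succ', Module.End.mul_apply, ih, pow_succ]; rfl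
  have hpow : (post - pre) ^ p = post ^ p - pre ^ p := by
    obtain _ | _ := subsingleton_or_nontrivial (Module.End R (M →ₗ[R] N))
    · exact Subsingleton.elim _ _
    · have : CharP (Module.End R (M →ₗ[R] N)) p := (CharP.charP_iff_prime_eq_zero hp.out).2 <| by
        rw [← map_natCast (algebraMap R _), CharP.cast_eq_zero, map_zero]
      exact sub_pow_char_of_commute p hcomm
  ext f m : 2
  rw [hsub, hpow, LinearMap.sub_apply, LinearMap.sub_apply, hpost, hpre, hM, hN]
  rfl

/-- With `T` the action of `h`, the cocycle `T ^ (p - 1) f` is a coboundary and `T` annihilates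
`f - T ^ (p - 1) f`. -/
lemma ActsTorally.exists_lie_add_d₁₂_eq_zero [Fact p.Prime] [CharP R p] {h : L}
    (hL : ActsTorally R L p h) (hM : ActsTorally R M p h) {f : twoCochain R L M}
    (hf : f ∈ twoCocycle R L M) :
    ∃ g : oneCochain R L M, ⁅h, (f + d₁₂ R L M g).1⁆ = 0 ∧
      ∀ h' : L, ⁅h', h⁆ = 0 → ⁅h', f.1⁆ = 0 → ⁅h', (f + d₁₂ R L M g).1⁆ = 0 := by
  let T := LieModule.toEnd R L (L →ₗ[R] L →ₗ[R] M)
  have hp : p - 2 + 1 + 1 = p := by have := (Fact.out : p.Prime).two_le; omega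
  have hT : T h ^ p = T h := hL.linearMap (hL.linearMap hM)
  have hpow (k : ℕ) : ∃ f' ∈ twoCocycle R L M, f'.1 = (T h ^ k) f.1 := by
    induction k with
    | zero => exact ⟨f, hf, rfl⟩
    | succ k ih =>
      obtain ⟨f', hf', hk⟩ := ih
      exact ⟨_, d₁₂_mem_twoCocycle (f' h), by
        rw [← lie_eq_d₁₂ hf', hk, pow_succ', Module.End.mul_apply]; rfl⟩
  obtain ⟨f', hf', hk⟩ := hpow (p - 2)
  have hg : (f + d₁₂ R L M (-f' h)).1 = f.1 - (T h ^ (p - 2 + 1)) f.1 := by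
    rw [pow_succ', Module.End.mul_apply, ← hk, sub_eq_add_neg]
    exact congrArg (f.1 + ·) ((((twoCochain R L M).subtype ∘ₗ d₁₂ R L M).map_neg (f' h)).trans
      (congrArg Neg.neg (lie_eq_d₁₂ hf' h).symm))
  refine ⟨-f' h, ?_, fun h' hh' hf₀ => ?_⟩
  · change T h _ = 0
    rw [hg, map_sub, ← Module.End.mul_apply (T h), ← pow_succ', hp, hT, sub_self]
  · have hlie : ⁅T h', T h⁆ = 0 := by
      simpa only [LieHom.map_lie, map_zero] using congrArg T hh'
    have hcomm : Commute (T h') (T h) := sub_eq_zero.1 hlie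
    change T h' _ = 0
    have hf₀' : T h' f.1 = 0 := hf₀
    rw [hg, map_sub, ← Module.End.mul_apply (T h'), (hcomm.pow_right _).eq, Module.End.mul_apply,
      hf₀', map_zero, sub_zero]

end Toral

section Squaring

open Finset

variable {K L : Type*} [Field K] [LieRing L] [LieAlgebra K L] (δ : LieDerivation K L L)

/-- The divided power `δ ^ k / k!` of a derivation. In characteristic `p` it is `0` for `k ≥ p`,
by the convention `0⁻¹ = 0`. -/
def dividedPow (k : ℕ) : L →ₗ[K] L := (k.factorial : K)⁻¹ • (δ : L →ₗ[K] L) ^ k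

lemma dividedPow_apply (k : ℕ) (x : L) : dividedPow δ k x = (k.factorial : K)⁻¹ • δ^[k] x := by
  rw [dividedPow, LinearMap.smul_apply, Module.End.pow_apply]
  rfl

lemma dividedPow_zero_apply (x : L) : dividedPow δ 0 x = x := by
  simp [dividedPow]

lemma dividedPow_char (p : ℕ) [hp : Fact p.Prime] [CharP K p] : dividedPow δ p = 0 := by
  rw [dividedPow, (CharP.cast_eq_zero_iff K p _).2 (Nat.dvd_factorial hp.out.pos le_rfl), inv_zero,
    zero_smul]

lemma dividedPow_lie {p k : ℕ} [hp : Fact p.Prime] [CharP K p] (hk : k < p) (x y : L) :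
    dividedPow δ k ⁅x, y⁆ = ∑ ij ∈ antidiagonal k, ⁅dividedPow δ ij.1 x, dividedPow δ ij.2 y⁆ := by
  have hne {n : ℕ} (hn : n ≤ k) : (n.factorial : K) ≠ 0 := fun h =>
    (hn.trans_lt hk).not_ge ((hp.out.dvd_factorial).1 ((CharP.cast_eq_zero_iff K p _).1 h))
  simp only [dividedPow_apply, LieDerivation.iterate_apply_lie, smul_sum, smul_lie, lie_smul]
  refine sum_congr rfl fun ij hij => ?_
  obtain ⟨i, j⟩ := ij
  obtain rfl := mem_antidiagonal.1 hij
  have hchoose : ((i + j).choose i : K) * i.factorial * j.factorial = (i + j).factorial := by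
    rw [← Nat.add_choose_mul_factorial_mul_factorial i j, Nat.choose_symm_add]
    push_cast
    rfl
  rw [← Nat.cast_smul_eq_nsmul K, smul_smul, smul_smul]
  congr 1
  rw [inv_mul_eq_iff_eq_mul₀ (hne le_rfl), ← hchoose]
  have hi := hne (Nat.le_add_right i j)
  have hj := hne (Nat.le_add_left j i)
  field_simp

/-- The squaring `Sq(δ)(x, y) = ∑ ⁅δ ^ i x, δ ^ j y⁆ / (i! j!)` over `i + j = p`; in characteristic
`p` the terms with `i = 0` or `j = 0` vanish, by the convention `0⁻¹ = 0`. -/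
def squaring (p : ℕ) : twoCochain K L L where
  val := ∑ ij ∈ antidiagonal p,
    (LieModule.toEnd K L L : L →ₗ[K] Module.End K L).compl₁₂ (dividedPow δ ij.1)
      (dividedPow δ ij.2)
  property x := by
    simp only [LinearMap.sum_apply, LinearMap.compl₁₂_apply]
    refine sum_involution (fun ij _ => ij.swap) (fun ij _ => ?_) (fun ij _ h heq => h ?_)
      (fun ij hij => by simpa [add_comm] using hij) (fun ij _ => ij.swap_swap)
    · exact add_eq_zero_iff_eq_neg.2 (lie_skew ..).symm
    · rw [← congrArg Prod.fst heq]
      exact lie_self _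

lemma squaring_apply (p : ℕ) (x y : L) :
    squaring δ p x y = ∑ ij ∈ antidiagonal p, ⁅dividedPow δ ij.1 x, dividedPow δ ij.2 y⁆ := by
  change (∑ ij ∈ antidiagonal p, _ : L →ₗ[K] L →ₗ[K] L) x y = _
  simp only [LinearMap.sum_apply]
  rfl

lemma squaring_apply_eq_sum_Icc (p : ℕ) [hp : Fact p.Prime] [CharP K p] (x y : L) :
    squaring δ p x y = ∑ i ∈ Icc 1 (p - 1),
      ((i.factorial * (p - i).factorial : ℕ) : K)⁻¹ • ⁅δ^[i] x, δ^[p - i] y⁆ := by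
  have hpos := hp.out.pos
  rw [squaring_apply, Nat.sum_antidiagonal_eq_sum_range_succ fun i j =>
    ⁅dividedPow δ i x, dividedPow δ j y⁆]
  refine (sum_subset (fun i hi => ?_) fun i hi hi' => ?_).symm.trans
    (sum_congr rfl fun i _ => ?_)
  · rw [mem_Icc] at hi
    rw [mem_range]
    omega
  · have hcases : i = 0 ∨ i = p := by
      rw [mem_range] at hi
      rw [mem_Icc] at hi'
      omega
    obtain rfl | hip := hcases
    · rw [Nat.sub_zero, dividedPow_char δ p, LinearMap.zero_apply, lie_zero]
    · rw [hip, dividedPow_char δ p, LinearMap.zero_apply, zero_lie]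
  · rw [dividedPow_apply, dividedPow_apply, smul_lie, lie_smul, smul_smul, Nat.cast_mul, mul_inv]

lemma sum_antidiagonal_rotate {A : Type*} [AddCommMonoid A] (n : ℕ) (φ : ℕ → ℕ → ℕ → A) :
    ∑ kl ∈ antidiagonal n, ∑ ij ∈ antidiagonal kl.2, φ kl.1 ij.1 ij.2 =
      ∑ kl ∈ antidiagonal n, ∑ ij ∈ antidiagonal kl.2, φ ij.1 ij.2 kl.1 := by
  simp only [sum_sigma']
  refine sum_nbij' (fun t => ⟨(t.2.2, t.1.1 + t.2.1), (t.1.1, t.2.1)⟩)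
    (fun t => ⟨(t.2.1, t.2.2 + t.1.1), (t.2.2, t.1.1)⟩) ?_ ?_ ?_ ?_ ?_
  all_goals
    rintro ⟨⟨k, l⟩, i, j⟩ h
    simp only [mem_sigma, HasAntidiagonal.mem_antidiagonal] at h
    obtain ⟨rfl, rfl⟩ := h
    simp [add_comm, add_left_comm]

lemma squaring_lie_add_lie_squaring (p : ℕ) [Fact p.Prime] [CharP K p] (x y z : L) :
    squaring δ p z ⁅x, y⁆ + ⁅z, squaring δ p x y⁆ =
      ∑ kl ∈ antidiagonal p, ∑ ij ∈ antidiagonal kl.2,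
        ⁅dividedPow δ kl.1 z, ⁅dividedPow δ ij.1 x, dividedPow δ ij.2 y⁆⁆ := by
  have hmem : (0, p) ∈ antidiagonal p := by simp
  rw [squaring_apply, ← add_sum_erase _ _ hmem, ← add_sum_erase _ _ hmem, squaring_apply, lie_sum,
    add_comm]
  simp only [dividedPow_char δ p, dividedPow_zero_apply, LinearMap.zero_apply, lie_zero, zero_add]
  refine congrArg _ (sum_congr rfl fun kl hkl => ?_)
  have hkl' : kl.2 < p := by
    obtain ⟨hne, hmem⟩ := mem_erase.1 hkl
    have := mem_antidiagonal.1 hmem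
    refine lt_of_le_of_ne (by omega) fun h => hne (Prod.ext ?_ h)
    change kl.1 = 0
    omega
  rw [dividedPow_lie δ hkl', lie_sum]

/-- The cyclic sum is indexed by triples `i + j + k = p`, and the terms of each triple cancel by the
Jacobi identity. -/
lemma squaring_mem_twoCocycle (p : ℕ) [Fact p.Prime] [CharP K p] :
    squaring δ p ∈ twoCocycle K L L := by
  refine mem_twoCocycle_iff_cyclic.2 fun x y z => ?_
  let d := dividedPow δ
  calc _ = (squaring δ p z ⁅x, y⁆ + ⁅z, squaring δ p x y⁆) +
        (squaring δ p x ⁅y, z⁆ + ⁅x, squaring δ p y z⁆) +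
        (squaring δ p y ⁅z, x⁆ + ⁅y, squaring δ p z x⁆) := by abel
    _ = ∑ kl ∈ antidiagonal p, ∑ ij ∈ antidiagonal kl.2,
        (⁅d kl.1 z, ⁅d ij.1 x, d ij.2 y⁆⁆ + ⁅d ij.1 x, ⁅d ij.2 y, d kl.1 z⁆⁆ +
          ⁅d ij.2 y, ⁅d kl.1 z, d ij.1 x⁆⁆) := by
      simp only [squaring_lie_add_lie_squaring, sum_add_distrib]
      rw [sum_antidiagonal_rotate p fun i j k => ⁅d i x, ⁅d j y, d k z⁆⁆,
        sum_antidiagonal_rotate p fun i j k => ⁅d i y, ⁅d j z, d k x⁆⁆,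
        sum_antidiagonal_rotate p fun i j k => ⁅d j y, ⁅d k z, d i x⁆⁆]
    _ = 0 := sum_eq_zero fun kl _ => sum_eq_zero fun ij _ => lie_jacobi _ _ _

lemma lie_squaring_eq_zero (p : ℕ) [CharP K p] {h : L} {w : K}
    (hδ : ∀ x, ⁅h, δ x⁆ = δ ⁅h, x⁆ + w • δ x) : ⁅h, (squaring δ p).1⁆ = 0 := by
  have hpow (k : ℕ) (x : L) :
      ⁅h, dividedPow δ k x⁆ = dividedPow δ k ⁅h, x⁆ + (k * w) • dividedPow δ k x := by
    simp only [dividedPow_apply, lie_smul, smul_comm _ (k.factorial : K)⁻¹, ← smul_add]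
    congr 1
    induction k with
    | zero => simp
    | succ k ih =>
      simp only [Function.iterate_succ_apply', hδ, ih, map_add, map_smul, Nat.cast_succ]
      module
  ext x y
  simp only [LieHom.lie_apply, LinearMap.sub_apply, twoCochain_val_apply, squaring_apply, lie_sum,
    LinearMap.zero_apply, ← sum_sub_distrib]
  refine sum_eq_zero fun ij hij => ?_
  have hw : (ij.1 : K) + ij.2 = 0 := by
    rw [← Nat.cast_add, mem_antidiagonal.1 hij, CharP.cast_eq_zero]
  rw [leibniz_lie, hpow, hpow, add_lie, lie_add, smul_lie, lie_smul]
  calc _ = (((ij.1 : K) + ij.2) * w) • ⁅dividedPow δ ij.1 x, dividedPow δ ij.2 y⁆ := by module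
    _ = 0 := by rw [hw, zero_mul, zero_smul]

lemma ad_apply_eq_lie (u x : L) : LieDerivation.ad K L u x = ⁅u, x⁆ :=
  LinearMap.congr_fun (LieDerivation.coe_ad_apply_eq_ad_apply u) x

lemma lie_squaring_ad_eq_zero (p : ℕ) [CharP K p] {h u : L} {w : K} (hu : ⁅h, u⁆ = w • u) :
    ⁅h, (squaring (LieDerivation.ad K L u) p).1⁆ = 0 := by
  refine lie_squaring_eq_zero _ p (w := w) fun x => ?_
  rw [ad_apply_eq_lie, ad_apply_eq_lie, leibniz_lie, hu, smul_lie, add_comm]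

end Squaring

section TruncatedPolynomials

/-- The monomial `x₁^m x₂^n`, which vanishes as soon as an exponent exceeds `4`. -/
def mon (m n : ℕ) : A F := fun a => if a.1.val = m ∧ a.2.val = n then 1 else 0

lemma X_eq_mon (b : Idx) : (X b : A F) = mon b.1 b.2 := by
  funext a
  simp [X, mon, Prod.ext_iff, Fin.ext_iff]

lemma mon_eq_X {m n : ℕ} (hm : m < 5) (hn : n < 5) : (mon m n : A F) = X (⟨m, hm⟩, ⟨n, hn⟩) :=
  (X_eq_mon (⟨m, hm⟩, ⟨n, hn⟩)).symm

lemma mon_eq_zero {m n : ℕ} (h : ¬(m < 5 ∧ n < 5)) : (mon m n : A F) = 0 := by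
  funext a
  have h1 := a.1.isLt
  have h2 := a.2.isLt
  simp only [mon, Pi.zero_apply, ite_eq_right_iff, one_ne_zero, imp_false]
  omega

lemma eq_sum_X (f : A F) : f = ∑ b, f b • (X b : A F) := by
  funext a
  simp [X, Finset.sum_apply]

@[elab_as_elim]
lemma A_induction {p : A F → Prop} (hadd : ∀ f g, p f → p g → p (f + g))
    (hsmul : ∀ (c : F) f, p f → p (c • f)) (hmon : ∀ m n, p (mon m n)) (f : A F) : p f := by
  have h0 : p 0 := by simpa using hsmul 0 _ (hmon 0 0)
  rw [eq_sum_X f]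
  exact Finset.sum_induction _ p hadd h0 fun b _ => hsmul _ _ (X_eq_mon (F := F) b ▸ hmon _ _)

lemma mulA_add_left (f g h : A F) : mulA (f + g) h = mulA f h + mulA g h := by
  funext a
  simp only [mulA, Pi.add_apply, ← Finset.sum_add_distrib, add_mul]
  exact Finset.sum_congr rfl fun b _ => Finset.sum_congr rfl fun c _ => by split_ifs <;> simp

lemma mulA_smul_left (r : F) (f g : A F) : mulA (r • f) g = r • mulA f g := by
  funext a
  simp only [mulA, Pi.smul_apply, smul_eq_mul, Finset.mul_sum, mul_ite, mul_zero, mul_assoc]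

lemma mulA_comm (f g : A F) : mulA f g = mulA g f := by
  funext a
  rw [mulA, Finset.sum_comm]
  simp only [mulA, add_comm, mul_comm]

lemma mulA_add_right (f g h : A F) : mulA f (g + h) = mulA f g + mulA f h := by
  simp only [mulA_comm f, mulA_add_left]

lemma mulA_smul_right (r : F) (f g : A F) : mulA f (r • g) = r • mulA f g := by
  simp only [mulA_comm f, mulA_smul_left]

lemma zero_mulA (f : A F) : mulA 0 f = 0 := by
  simpa using mulA_smul_left 0 (0 : A F) f

lemma mulA_mon (a b c d : ℕ) : mulA (mon a b) (mon c d : A F) = mon (a + c) (b + d) := by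
  by_cases h1 : a < 5 ∧ b < 5
  · by_cases h2 : c < 5 ∧ d < 5
    · rw [mon_eq_X h1.1 h1.2, mon_eq_X h2.1 h2.2]
      funext k
      simp only [mulA, X, mon]
      rw [Finset.sum_eq_single (⟨a, h1.1⟩, ⟨b, h1.2⟩) (by intro x _ hx; simp [hx]) (by simp),
        Finset.sum_eq_single (⟨c, h2.1⟩, ⟨d, h2.2⟩) (by intro x _ hx; simp [hx]) (by simp)]
      simp [eq_comm]
    · rw [mon_eq_zero h2, mon_eq_zero (m := a + c) (n := b + d) (by omega), mulA_comm, zero_mulA]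
  · rw [mon_eq_zero h1, mon_eq_zero (m := a + c) (n := b + d) (by omega), zero_mulA]

lemma mulA_assoc (f g h : A F) : mulA (mulA f g) h = mulA f (mulA g h) := by
  induction f using A_induction with
  | hadd f f' i i' => simp only [mulA_add_left, i, i']
  | hsmul c f i => simp only [mulA_smul_left, i]
  | hmon a b =>
    induction g using A_induction with
    | hadd f f' i i' => simp only [mulA_add_left, mulA_add_right, i, i']
    | hsmul c f i => simp only [mulA_smul_left, mulA_smul_right, i]
    | hmon c d =>
      induction h using A_induction with
      | hadd f f' i i' => simp only [mulA_add_right, i, i']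
      | hsmul c f i => simp only [mulA_smul_right, i]
      | hmon e k => simp only [mulA_mon, add_assoc]

lemma mulA_one (f : A F) : mulA f (mon 0 0) = f := by
  induction f using A_induction with
  | hadd f g h h' => rw [mulA_add_left, h, h']
  | hsmul c f h => rw [mulA_smul_left, h]
  | hmon a b => rw [mulA_mon, add_zero, add_zero]

lemma d1_add (f g : A F) : d1 (f + g) = d1 f + d1 g := by
  funext a
  simp only [d1, Pi.add_apply]
  split_ifs <;> simp [mul_add]

lemma d2_add (f g : A F) : d2 (f + g) = d2 f + d2 g := by
  funext a
  simp only [d2, Pi.add_apply]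
  split_ifs <;> simp [mul_add]

lemma d1_smul (r : F) (f : A F) : d1 (r • f) = r • d1 f := by
  funext a
  simp only [d1, Pi.smul_apply, smul_eq_mul]
  split_ifs <;> simp [mul_left_comm]

lemma d2_smul (r : F) (f : A F) : d2 (r • f) = r • d2 f := by
  funext a
  simp only [d2, Pi.smul_apply, smul_eq_mul]
  split_ifs <;> simp [mul_left_comm]

lemma natCast_smul_mon_pred_add_left (a c b : ℕ) :
    (a : F) • (mon (a - 1 + c) b : A F) = (a : F) • mon (a + c - 1) b := by
  rcases a with _ | a
  · simp
  · congr 2; omega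

lemma natCast_smul_mon_pred_add_right (a c b : ℕ) :
    (a : F) • (mon b (a - 1 + c) : A F) = (a : F) • mon b (a + c - 1) := by
  rcases a with _ | a
  · simp
  · congr 2; omega

/-- The commutative algebra structure which `mulA` puts on `A F`; a type synonym, because `A F`
already carries the pointwise product. -/
def TruncPoly (F : Type*) [Field F] : Type _ := A F

instance : AddCommGroup (TruncPoly F) := inferInstanceAs (AddCommGroup (Idx → F))

instance : Module F (TruncPoly F) := inferInstanceAs (Module F (Idx → F))

instance : CommRing (TruncPoly F) where
  __ := (inferInstance : AddCommGroup (TruncPoly F))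
  mul := mulA
  one := (mon 0 0 : A F)
  left_distrib := mulA_add_right
  right_distrib := mulA_add_left
  zero_mul := zero_mulA
  mul_zero f := (mulA_comm _ _).trans (zero_mulA f)
  mul_assoc := mulA_assoc
  one_mul f := (mulA_comm _ _).trans (mulA_one f)
  mul_one := mulA_one
  mul_comm := mulA_comm

instance : Algebra F (TruncPoly F) := Algebra.ofModule mulA_smul_left fun r f g =>
  mulA_smul_right r f g

variable [CharP F 5]

instance : CharP (TruncPoly F) 5 := by
  have : Nontrivial (TruncPoly F) := inferInstanceAs (Nontrivial (Idx → F))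
  exact charP_of_injective_algebraMap (algebraMap F (TruncPoly F)).injective 5

lemma d1_mon (a b : ℕ) : d1 (mon a b : A F) = (a : F) • mon (a - 1) b := by
  funext k
  have hk := k.1.isLt
  have h5 : ((4 + 1 : ℕ) : F) = 0 := CharP.cast_eq_zero F 5
  simp only [d1, mon, Pi.smul_apply, smul_eq_mul, mul_ite, mul_one, mul_zero]
  rcases a with _ | m
  · simp
  · rw [Nat.add_sub_cancel]
    split_ifs with h1 h2 h3 h4
    · rw [h2.1]
    · omega
    · omega
    · rfl
    · rw [show m = 4 by omega, h5]
    · rfl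

lemma d2_mon (a b : ℕ) : d2 (mon a b : A F) = (b : F) • mon a (b - 1) := by
  funext k
  have hk := k.2.isLt
  have h5 : ((4 + 1 : ℕ) : F) = 0 := CharP.cast_eq_zero F 5
  simp only [d2, mon, Pi.smul_apply, smul_eq_mul, mul_ite, mul_one, mul_zero]
  rcases b with _ | m
  · simp
  · rw [Nat.add_sub_cancel]
    split_ifs with h1 h2 h3 h4
    · rw [h2.2]
    · omega
    · omega
    · rfl
    · rw [show m = 4 by omega, h5]
    · rfl

lemma d1_mulA (f g : A F) : d1 (mulA f g) = mulA f (d1 g) + mulA g (d1 f) := by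
  rw [mulA_comm g, add_comm]
  induction f using A_induction with
  | hadd f f' h h' => simp only [mulA_add_left, d1_add, h, h']; abel
  | hsmul c f h => simp only [mulA_smul_left, d1_smul, h, smul_add]
  | hmon a b =>
    induction g using A_induction with
    | hadd f f' h h' => simp only [mulA_add_right, d1_add, h, h']; abel
    | hsmul c f h => simp only [mulA_smul_right, d1_smul, h, smul_add]
    | hmon c d =>
      simp only [mulA_mon, d1_mon, mulA_smul_left, mulA_smul_right, natCast_smul_mon_pred_add_left,
        add_comm a (c - 1), add_comm c a, Nat.cast_add, add_smul]

lemma d2_mulA (f g : A F) : d2 (mulA f g) = mulA f (d2 g) + mulA g (d2 f) := by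
  rw [mulA_comm g, add_comm]
  induction f using A_induction with
  | hadd f f' h h' => simp only [mulA_add_left, d2_add, h, h']; abel
  | hsmul c f h => simp only [mulA_smul_left, d2_smul, h, smul_add]
  | hmon a b =>
    induction g using A_induction with
    | hadd f f' h h' => simp only [mulA_add_right, d2_add, h, h']; abel
    | hsmul c f h => simp only [mulA_smul_right, d2_smul, h, smul_add]
    | hmon c d =>
      simp only [mulA_mon, d2_mon, mulA_smul_left, mulA_smul_right, natCast_smul_mon_pred_add_right,
        add_comm b (d - 1), add_comm d b, Nat.cast_add, add_smul]

lemma d1_d2 (f : A F) : d1 (d2 f) = d2 (d1 f) := by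
  induction f using A_induction with
  | hadd f g h h' => simp only [d1_add, d2_add, h, h']
  | hsmul c f h => simp only [d1_smul, d2_smul, h]
  | hmon a b => rw [d1_mon, d2_mon, d1_smul, d2_smul, d1_mon, d2_mon, smul_comm]

/-- `∂/∂x₁` as a derivation. -/
def derivOne : Derivation F (TruncPoly F) (TruncPoly F) :=
  Derivation.mk' ⟨⟨d1, d1_add⟩, d1_smul⟩ d1_mulA

/-- `∂/∂x₂` as a derivation. -/
def derivTwo : Derivation F (TruncPoly F) (TruncPoly F) :=
  Derivation.mk' ⟨⟨d2, d2_add⟩, d2_smul⟩ d2_mulA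

end TruncatedPolynomials

section Bracket

variable {k R : Type*} [CommRing k] [CommRing R] [Algebra k R] (p q : Derivation k R R)

/-- The Melikian bracket on `R ⊕ R² ⊕ R²`, for a commutative algebra `R` with two derivations in
the roles of `∂/∂x₁` and `∂/∂x₂`. -/
def derivationBracket (u v : R × (R × R) × (R × R)) : R × (R × R) × (R × R) :=
  let dv (D : R × R) : R := p D.1 + q D.2
  let ap (D : R × R) (f : R) : R := D.1 * p f + D.2 * q f
  ( ap u.2.1 v.1 - 2 * (dv u.2.1 * v.1) - (ap v.2.1 u.1 - 2 * (dv v.2.1 * u.1))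
      + (u.2.2.1 * v.2.2.2 - u.2.2.2 * v.2.2.1),
    (ap u.2.1 v.2.1.1 - ap v.2.1 u.2.1.1 + u.1 * v.2.2.1 - v.1 * u.2.2.1,
     ap u.2.1 v.2.1.2 - ap v.2.1 u.2.1.2 + u.1 * v.2.2.2 - v.1 * u.2.2.2),
    (ap u.2.1 v.2.2.1 - ap v.2.2 u.2.1.1 + 2 * (dv u.2.1 * v.2.2.1)
      - (ap v.2.1 u.2.2.1 - ap u.2.2 v.2.1.1 + 2 * (dv v.2.1 * u.2.2.1))
      + 2 * (v.1 * q u.1 - u.1 * q v.1),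
     ap u.2.1 v.2.2.2 - ap v.2.2 u.2.1.2 + 2 * (dv u.2.1 * v.2.2.2)
      - (ap v.2.1 u.2.2.2 - ap u.2.2 v.2.1.2 + 2 * (dv v.2.1 * u.2.2.2))
      + 2 * (u.1 * p v.1 - v.1 * p u.1)))

lemma derivationBracket_self (u : R × (R × R) × (R × R)) : derivationBracket p q u u = 0 := by
  simp only [derivationBracket, Prod.mk_eq_zero]
  refine ⟨?_, ⟨?_, ?_⟩, ?_, ?_⟩ <;> ring

lemma derivationBracket_skew (u v : R × (R × R) × (R × R)) :
    derivationBracket p q u v = -derivationBracket p q v u := by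
  simp only [derivationBracket, Prod.neg_mk, Prod.mk.injEq]
  refine ⟨?_, ⟨?_, ?_⟩, ?_, ?_⟩ <;> ring

lemma derivationBracket_add (u v w : R × (R × R) × (R × R)) :
    derivationBracket p q u (v + w) = derivationBracket p q u v + derivationBracket p q u w := by
  simp only [derivationBracket, Prod.fst_add, Prod.snd_add, Prod.mk_add_mk, map_add, Prod.mk.injEq]
  refine ⟨?_, ⟨?_, ?_⟩, ?_, ?_⟩ <;> ring

lemma derivationBracket_smul (c : k) (u v : R × (R × R) × (R × R)) :
    derivationBracket p q u (c • v) = c • derivationBracket p q u v := by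
  simp only [derivationBracket, Prod.smul_fst, Prod.smul_snd, Prod.smul_mk, Derivation.map_smul,
    Prod.mk.injEq]
  simp only [Algebra.smul_def]
  refine ⟨?_, ⟨?_, ?_⟩, ?_, ?_⟩ <;> ring

lemma derivationBracket_leibniz [CharP R 5] (hpq : ∀ a, p (q a) = q (p a))
    (u v w : R × (R × R) × (R × R)) :
    derivationBracket p q u (derivationBracket p q v w) =
      derivationBracket p q (derivationBracket p q u v) w +
        derivationBracket p q v (derivationBracket p q u w) := by
  obtain ⟨a, ⟨b, c⟩, d, e⟩ := u
  obtain ⟨a', ⟨b', c'⟩, d', e'⟩ := v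
  obtain ⟨a'', ⟨b'', c''⟩, d'', e''⟩ := w
  have h5 : (5 : R) = 0 := CharP.cast_eq_zero R 5
  have h10 : (10 : R) = 0 := by linear_combination 2 * h5
  have h2p : p 2 = 0 := by simpa using p.map_natCast 2
  have h2q : q 2 = 0 := by simpa using q.map_natCast 2
  rw [← sub_eq_zero]
  simp only [derivationBracket, Prod.mk_add_mk, Prod.mk_sub_mk, Prod.mk_eq_zero, map_add, map_sub,
    Derivation.leibniz, smul_eq_mul, hpq, h2p, h2q]
  refine ⟨?_, ⟨?_, ?_⟩, ?_, ?_⟩ <;> ring_nf <;>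
    simp only [h5, h10, mul_zero, neg_zero, add_zero, sub_zero]

end Bracket

section LieAlgebra

/-- The Melikian algebra as a Lie algebra; a type synonym, because the product of the abelian Lie
algebras `Idx → F` is already a Lie algebra. -/
def MelikianAlgebra (F : Type*) [Field F] : Type _ := Mel F

instance : AddCommGroup (MelikianAlgebra F) := inferInstanceAs (AddCommGroup (Mel F))

instance : Module F (MelikianAlgebra F) := inferInstanceAs (Module F (Mel F))

variable [CharP F 5]

lemma brM_eq_derivationBracket :
    (brM : Mel F → Mel F → Mel F) =
      derivationBracket (R := TruncPoly F) (derivOne (F := F)) derivTwo := by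
  funext u v
  simp only [brM, two_smul, derivationBracket, two_mul]
  rfl

lemma brM_skew (u v : Mel F) : brM u v = -brM v u := by
  rw [brM_eq_derivationBracket]
  exact derivationBracket_skew (R := TruncPoly F) ..

lemma brM_add (u v w : Mel F) : brM u (v + w) = brM u v + brM u w := by
  rw [brM_eq_derivationBracket]
  exact derivationBracket_add (R := TruncPoly F) ..

instance : LieRing (MelikianAlgebra F) where
  bracket u v := brM u v
  add_lie u v w :=
    (brM_skew ..).trans ((congrArg Neg.neg (brM_add ..)).trans <| (neg_add ..).trans <|
      congrArg₂ (· + ·) (brM_skew ..).symm (brM_skew ..).symm)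
  lie_add := brM_add
  lie_self u := by
    change brM u u = 0
    rw [brM_eq_derivationBracket]
    exact derivationBracket_self (R := TruncPoly F) ..
  leibniz_lie u v w := by
    change brM u (brM v w) = brM (brM u v) w + brM v (brM u w)
    rw [brM_eq_derivationBracket]
    exact derivationBracket_leibniz (R := TruncPoly F) _ _ (fun f => d1_d2 f) u v w

instance : LieAlgebra F (MelikianAlgebra F) where
  lie_smul c u v := by
    change brM u (c • v) = c • brM u v
    rw [brM_eq_derivationBracket]
    exact derivationBracket_smul (R := TruncPoly F) ..

end LieAlgebra

section StructureConstants

/-- The inclusion of the `s`-th summand of `M = A(2)D̃₁ ⊕ A(2)D̃₂ ⊕ A(2) ⊕ A(2)D₁ ⊕ A(2)D₂`. -/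
def summand (s : ℕ) (f : A F) : Mel F :=
  match s with
  | 0 => (0, 0, (f, 0))
  | 1 => (0, 0, (0, f))
  | 2 => (f, 0, 0)
  | 3 => (0, (f, 0), 0)
  | _ => (0, (0, f), 0)

/-- The monomial `x₁^a x₂^b` in the `s`-th summand. -/
def monVec (s a b : ℕ) : MelikianAlgebra F := summand s (mon a b)

/-- The monomial basis of the Melikian algebra. The code `k = 25 a + 5 b + s` stands for the
monomial `x₁^a x₂^b` in the `s`-th summand; the vector is `0` for `k ≥ 125`. -/
def e (k : ℕ) : MelikianAlgebra F := monVec (k % 5) (k / 25) (k / 5 % 5)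

/-- The bracket of the monomials with exponents `(a, b)` in the `s`-th and `(c, d)` in the `t`-th
summand, as a list of terms: coefficient modulo `5`, summand and exponents. Only the pairs `s ≤ t`
are listed. -/
def bracketTable (s a b t c d : ℕ) : List (ℕ × ℕ × ℕ × ℕ) :=
  match s, t with
  | 0, 1 => [(1, 2, a + c, b + d)]
  | 0, 2 => [(4, 3, a + c, b + d)]
  | 0, 3 => [(4 * a + 4 * c, 0, a + c - 1, b + d)]
  | 0, 4 => [(4 * b + 3 * d, 0, a + c, b + d - 1), (c, 1, a + c - 1, b + d)]
  | 1, 2 => [(4, 4, a + c, b + d)]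
  | 1, 3 => [(4 * a + 3 * c, 1, a + c - 1, b + d), (d, 0, a + c, b + d - 1)]
  | 1, 4 => [(4 * b + 4 * d, 1, a + c, b + d - 1)]
  | 2, 2 => [(2 * b + 3 * d, 0, a + c, b + d - 1), (3 * a + 2 * c, 1, a + c - 1, b + d)]
  | 2, 3 => [(4 * a + 2 * c, 2, a + c - 1, b + d)]
  | 2, 4 => [(4 * b + 2 * d, 2, a + c, b + d - 1)]
  | 3, 3 => [(4 * a + c, 3, a + c - 1, b + d)]
  | 3, 4 => [(c, 4, a + c - 1, b + d), (4 * b, 3, a + c, b + d - 1)]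
  | 4, 4 => [(4 * b + d, 4, a + c, b + d - 1)]
  | _, _ => []

/-- The structure constants of the monomial basis: `⁅e x, e y⁆ = ∑ c • e k` over the pairs
`(c, k)` of the list. -/
def bracketTerms (x y : ℕ) : List (ℕ × ℕ) :=
  if x % 5 ≤ y % 5 then
    encode 1 (bracketTable (x % 5) (x / 25) (x / 5 % 5) (y % 5) (y / 25) (y / 5 % 5))
  else encode 4 (bracketTable (y % 5) (y / 25) (y / 5 % 5) (x % 5) (x / 25) (x / 5 % 5))
where
  encode (c : ℕ) (l : List (ℕ × ℕ × ℕ × ℕ)) : List (ℕ × ℕ) := l.filterMap fun t =>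
    if c * t.1 % 5 ≠ 0 ∧ t.2.2.1 < 5 ∧ t.2.2.2 < 5 then
      some (c * t.1 % 5, 25 * t.2.2.1 + 5 * t.2.2.2 + t.2.1)
    else none

/-- The linear combination of basis vectors with coefficients and codes as listed. -/
def combination (l : List (ℕ × ℕ)) : MelikianAlgebra F := (l.map fun t => (t.1 : F) • e t.2).sum

lemma mulA_zero (f : A F) : mulA f 0 = 0 := by rw [mulA_comm, zero_mulA]

lemma d1_zero : d1 (0 : A F) = 0 := by simpa using d1_smul 0 (0 : A F)

lemma d2_zero : d2 (0 : A F) = 0 := by simpa using d2_smul 0 (0 : A F)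

lemma monVec_eq_zero {a b : ℕ} (h : ¬(a < 5 ∧ b < 5)) (s : ℕ) :
    (monVec s a b : MelikianAlgebra F) = 0 := by
  rw [monVec, mon_eq_zero h]
  unfold summand
  split <;> rfl

lemma e_of_lt {s a b : ℕ} (hs : s < 5) (hb : b < 5) :
    (e (25 * a + 5 * b + s) : MelikianAlgebra F) = monVec s a b := by
  rw [e, show (25 * a + 5 * b + s) % 5 = s by omega, show (25 * a + 5 * b + s) / 25 = a by omega,
    show (25 * a + 5 * b + s) / 5 % 5 = b by omega]

variable [CharP F 5]

lemma mulA_d1_mon (a b c d : ℕ) :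
    mulA (mon a b) (d1 (mon c d : A F)) = (c : F) • mon (a + c - 1) (b + d) := by
  rw [d1_mon, mulA_smul_right, mulA_mon, add_comm a, natCast_smul_mon_pred_add_left, add_comm c]

lemma mulA_d2_mon (a b c d : ℕ) :
    mulA (mon a b) (d2 (mon c d : A F)) = (d : F) • mon (a + c) (b + d - 1) := by
  rw [d2_mon, mulA_smul_right, mulA_mon, add_comm b, natCast_smul_mon_pred_add_right, add_comm d]

lemma d1_mon_mulA (a b c d : ℕ) :
    mulA (d1 (mon a b : A F)) (mon c d) = (a : F) • mon (a + c - 1) (b + d) := by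
  rw [mulA_comm, mulA_d1_mon, add_comm c, add_comm d]

lemma d2_mon_mulA (a b c d : ℕ) :
    mulA (d2 (mon a b : A F)) (mon c d) = (b : F) • mon (a + c) (b + d - 1) := by
  rw [mulA_comm, mulA_d2_mon, add_comm c, add_comm d]

lemma brM_summand_mon {s t : ℕ} (a b c d : ℕ) (hst : s ≤ t) (ht : t < 5) :
    brM (summand s (mon a b)) (summand t (mon c d) : Mel F) =
      ((bracketTable s a b t c d).map fun k =>
        (k.1 : F) • (summand k.2.1 (mon k.2.2.1 k.2.2.2) : Mel F)).sum := by
  have h5 : (5 : F) = 0 := CharP.cast_eq_zero F 5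
  have h3 : (3 : F) = -2 := by linear_combination h5
  have h4 : (4 : F) = -1 := by linear_combination h5
  have hs : s < 5 := hst.trans_lt ht
  interval_cases s <;> interval_cases t
  all_goals
    simp only [bracketTable, summand, brM, brW, Dw, divW, smulA, Prod.mk.injEq, Prod.mk_add_mk,
      Prod.mk_sub_mk, Prod.smul_mk, zero_mulA, mulA_zero, d1_zero, d2_zero, add_zero, zero_add,
      sub_zero, zero_sub, smul_zero, mulA_d1_mon, mulA_d2_mon, d1_mon_mulA, d2_mon_mulA, mulA_mon,
      Nat.add_comm c a, Nat.add_comm d b, Nat.cast_add, Nat.cast_mul, Nat.cast_ofNat, Nat.cast_one,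
      h3, h4, Prod.fst_zero, Prod.snd_zero, sub_self, Prod.mk_eq_zero, List.map_cons, List.map_nil,
      List.sum_cons, List.sum_nil]
    and_intros <;> first | trivial | module

lemma lie_monVec {s t : ℕ} (a b c d : ℕ) (hst : s ≤ t) (ht : t < 5) :
    ⁅(monVec s a b : MelikianAlgebra F), monVec t c d⁆ =
      ((bracketTable s a b t c d).map fun k =>
        (k.1 : F) • (monVec k.2.1 k.2.2.1 k.2.2.2 : MelikianAlgebra F)).sum :=
  brM_summand_mon a b c d hst ht

lemma bracketTable_summand_lt {s t : ℕ} (a b c d : ℕ) :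
    ∀ k ∈ bracketTable s a b t c d, k.2.1 < 5 := by
  unfold bracketTable
  split <;> simp

lemma natCast_mod_five (n : ℕ) : ((n % 5 : ℕ) : F) = n :=
  (CharP.cast_eq_mod F 5 n).symm

lemma combination_encode (c : ℕ) {l : List (ℕ × ℕ × ℕ × ℕ)} (hl : ∀ t ∈ l, t.2.1 < 5) :
    (combination (bracketTerms.encode c l) : MelikianAlgebra F) =
      (c : F) •
        (l.map fun t => (t.1 : F) • (monVec t.2.1 t.2.2.1 t.2.2.2 : MelikianAlgebra F)).sum := by
  induction l with
  | nil => exact (smul_zero _).symm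
  | cons t l ih =>
    have ih := ih fun t ht => hl t (List.mem_cons_of_mem _ ht)
    rw [List.map_cons, List.sum_cons, smul_add, smul_smul, ← Nat.cast_mul]
    refine Eq.trans ?_ (congrArg (_ + ·) ih)
    unfold bracketTerms.encode
    rw [List.filterMap_cons]
    split_ifs with h
    · rw [combination, List.map_cons, List.sum_cons, e_of_lt (hl t List.mem_cons_self) h.2.2,
        natCast_mod_five]
      rfl
    · refine (zero_add _).symm.trans (congrArg (· + _) ?_)
      by_cases hc : c * t.1 % 5 = 0
      · rw [← natCast_mod_five, hc, Nat.cast_zero, zero_smul]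
      · rw [monVec_eq_zero fun hlt => h ⟨hc, hlt⟩, smul_zero]

lemma lie_e (x y : ℕ) :
    ⁅(e x : MelikianAlgebra F), e y⁆ = (combination (bracketTerms x y) : MelikianAlgebra F) := by
  have hx : x % 5 < 5 := Nat.mod_lt _ (by norm_num)
  have hy : y % 5 < 5 := Nat.mod_lt _ (by norm_num)
  unfold bracketTerms
  split_ifs with h
  · rw [combination_encode _ (bracketTable_summand_lt _ _ _ _), Nat.cast_one, one_smul]
    exact lie_monVec _ _ _ _ h hy
  · have h5 : (5 : F) = 0 := CharP.cast_eq_zero F 5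
    have h4 : ((4 : ℕ) : F) = -1 := by push_cast; linear_combination h5
    rw [combination_encode _ (bracketTable_summand_lt _ _ _ _), ← lie_skew, h4, neg_smul, one_smul]
    exact congrArg Neg.neg (lie_monVec _ _ _ _ (not_le.1 h).le hx)

end StructureConstants

section Basis

lemma summand_add (s : ℕ) (f g : A F) : summand s (f + g) = summand s f + summand s g := by
  unfold summand
  split <;> simp

lemma summand_smul (s : ℕ) (c : F) (f : A F) : summand s (c • f) = c • summand s f := by
  unfold summand
  split <;> simp

lemma e_eq_zero {k : ℕ} (hk : 125 ≤ k) : (e k : MelikianAlgebra F) = 0 :=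
  monVec_eq_zero (by omega) _

lemma finrank_melikianAlgebra : Module.finrank F (MelikianAlgebra F) = 125 := by
  change Module.finrank F (Mel F) = 125
  simp

lemma span_range_e :
    Submodule.span F (Set.range fun k : Fin 125 => (e k : MelikianAlgebra F)) = ⊤ := by
  let S := Submodule.span F (Set.range fun k : Fin 125 => (e k : MelikianAlgebra F))
  have he (k : ℕ) : (e k : MelikianAlgebra F) ∈ S := by
    obtain hk | hk := lt_or_ge k 125
    · exact Submodule.subset_span ⟨⟨k, hk⟩, rfl⟩
    · exact e_eq_zero (F := F) hk ▸ S.zero_mem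
  have hmon {s : ℕ} (hs : s < 5) (a b : ℕ) : (monVec s a b : MelikianAlgebra F) ∈ S := by
    by_cases h : a < 5 ∧ b < 5
    · exact e_of_lt (F := F) hs h.2 ▸ he _
    · exact monVec_eq_zero (F := F) h s ▸ S.zero_mem
  have hsummand {s : ℕ} (hs : s < 5) (f : A F) : (summand s f : MelikianAlgebra F) ∈ S := by
    induction f using A_induction with
    | hadd f g hf hg => exact summand_add s f g ▸ S.add_mem hf hg
    | hsmul c f hf => exact summand_smul s c f ▸ S.smul_mem c hf
    | hmon a b => exact hmon hs a b
  refine eq_top_iff.2 fun v _ => ?_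
  have hv : v = ∑ i : Fin 5, (summand i (![v.2.2.1, v.2.2.2, v.1, v.2.1.1, v.2.1.2] i) :
      MelikianAlgebra F) := by
    rw [Fin.sum_univ_five]
    change v = (summand 0 v.2.2.1 + summand 1 v.2.2.2 + summand 2 v.1 + summand 3 v.2.1.1 +
      summand 4 v.2.1.2 : Mel F)
    simp [summand]
    rfl
  rw [hv]
  exact S.sum_mem fun i _ => hsummand i.2 _

/-- The monomial basis, indexed by the codes below `125`. -/
noncomputable def monomialBasis : Module.Basis (Fin 125) F (MelikianAlgebra F) :=
  basisOfTopLeSpanOfCardEqFinrank (fun k => e k) span_range_e.ge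
    (by rw [Fintype.card_fin, finrank_melikianAlgebra])

lemma monomialBasis_apply (k : Fin 125) : (monomialBasis k : MelikianAlgebra F) = e k :=
  congrFun (coe_basisOfTopLeSpanOfCardEqFinrank ..) k

/-- The coordinate with respect to `e k`; it is `0` for `k ≥ 125`. -/
noncomputable def coordAt (k : ℕ) : MelikianAlgebra F →ₗ[F] F :=
  if hk : k < 125 then monomialBasis.coord ⟨k, hk⟩ else 0

lemma coordAt_e {k : ℕ} (hk : k < 125) (j : ℕ) :
    coordAt k (e j : MelikianAlgebra F) = if j = k then 1 else 0 := by
  obtain hj | hj := lt_or_ge j 125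
  · rw [coordAt, dif_pos hk, ← monomialBasis_apply ⟨j, hj⟩, Module.Basis.coord_apply,
      Module.Basis.repr_self, Finsupp.single_apply]
    simp only [Fin.mk.injEq]
  · rw [e_eq_zero hj, map_zero, if_neg (by omega)]

lemma ext_coordAt {u v : MelikianAlgebra F} (h : ∀ k < 125, coordAt k u = coordAt k v) :
    u = v := by
  refine monomialBasis.ext_elem fun k => ?_
  simpa only [coordAt, dif_pos k.2, Module.Basis.coord_apply] using h k k.2

lemma linearMap_ext_e {N : Type*} [AddCommMonoid N] [Module F N] {φ ψ : MelikianAlgebra F →ₗ[F] N}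
    (h : ∀ k < 125, φ (e k) = ψ (e k)) : φ = ψ := by
  refine monomialBasis.ext fun k => ?_
  rw [monomialBasis_apply]
  exact h k k.2

end Basis

section Weights

/-- The weight of `e k` under `x₁D₁`, to be read modulo `5`. -/
def weightOne (k : ℕ) : ℕ :=
  k / 25 + shift (k % 5)
where
  shift (s : ℕ) : ℕ := (s + 1) % 5

/-- The weight of `e k` under `x₂D₂`, to be read modulo `5`. -/
def weightTwo (k : ℕ) : ℕ :=
  k / 5 % 5 + shift (k % 5)
where
  shift (s : ℕ) : ℕ :=
    match s with
    | 0 => 2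
    | 1 => 1
    | 2 => 3
    | 3 => 0
    | _ => 4

/-- The code of the monomial of weight `(w₁, w₂)` in the `s`-th summand. -/
def codeOfWeight (w₁ w₂ s : ℕ) : ℕ :=
  25 * ((w₁ + 5 - weightOne.shift s) % 5) + 5 * ((w₂ + 5 - weightTwo.shift s) % 5) + s

lemma codeOfWeight_lt (w₁ w₂ : ℕ) {s : ℕ} (hs : s < 5) : codeOfWeight w₁ w₂ s < 125 := by
  unfold codeOfWeight
  omega

lemma codeOfWeight_mod_five (w₁ w₂ : ℕ) {s : ℕ} (hs : s < 5) : codeOfWeight w₁ w₂ s % 5 = s := by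
  unfold codeOfWeight
  omega

lemma codeOfWeight_eq {w₁ w₂ k : ℕ} (hk : k < 125) (h₁ : weightOne k ≡ w₁ [MOD 5])
    (h₂ : weightTwo k ≡ w₂ [MOD 5]) : codeOfWeight w₁ w₂ (k % 5) = k := by
  have hs : weightOne.shift (k % 5) ≤ 4 := by unfold weightOne.shift; omega
  have hs' : weightTwo.shift (k % 5) ≤ 4 := by unfold weightTwo.shift; split <;> omega
  unfold Nat.ModEq weightOne at h₁
  unfold Nat.ModEq weightTwo at h₂
  unfold codeOfWeight
  omega

/-- The toral element `x₁D₁`. -/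
def torusOne : MelikianAlgebra F := e 28

/-- The toral element `x₂D₂`. -/
def torusTwo : MelikianAlgebra F := e 9

variable [CharP F 5]

lemma lie_e_of_bracketTerms_eq {x k w : ℕ}
    (h : bracketTerms x k = if w % 5 = 0 then [] else [(w % 5, k)]) :
    ⁅(e x : MelikianAlgebra F), e k⁆ = (w : F) • (e k : MelikianAlgebra F) := by
  rw [lie_e, h, ← natCast_mod_five w]
  split_ifs with hw
  · rw [hw, Nat.cast_zero, zero_smul]
    rfl
  · exact add_zero _

lemma lie_torusOne_e {k : ℕ} (hk : k < 125) :
    ⁅(torusOne : MelikianAlgebra F), e k⁆ =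
      (weightOne k : F) • (e k : MelikianAlgebra F) := by
  have table : ∀ k < 125, bracketTerms 28 k =
    if weightOne k % 5 = 0 then [] else [(weightOne k % 5, k)] := by decide +kernel
  exact lie_e_of_bracketTerms_eq (table k hk)

lemma lie_torusTwo_e {k : ℕ} (hk : k < 125) :
    ⁅(torusTwo : MelikianAlgebra F), e k⁆ =
      (weightTwo k : F) • (e k : MelikianAlgebra F) := by
  have table : ∀ k < 125, bracketTerms 9 k =
    if weightTwo k % 5 = 0 then [] else [(weightTwo k % 5, k)] := by decide +kernel
  exact lie_e_of_bracketTerms_eq (table k hk)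

lemma actsTorally_of_lie_e {h : MelikianAlgebra F} {w : ℕ → ℕ}
    (hw : ∀ k < 125, ⁅h, (e k : MelikianAlgebra F)⁆ = (w k : F) • (e k : MelikianAlgebra F)) :
    ActsTorally F (MelikianAlgebra F) 5 h := by
  have hpow (n : ℕ) {k : ℕ} (hk : k < 125) :
      (LieModule.toEnd F (MelikianAlgebra F) (MelikianAlgebra F) h ^ n) (e k) =
        (w k : F) ^ n • (e k : MelikianAlgebra F) := by
    induction n with
    | zero => simp
    | succ n ih =>
      rw [pow_succ', Module.End.mul_apply, ih, map_smul, LieModule.toEnd_apply_apply, hw k hk,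
        smul_smul, pow_succ]
  have : Fact (Nat.Prime 5) := ⟨by norm_num⟩
  refine linearMap_ext_e fun k hk => ?_
  rw [hpow 5 hk, LieModule.toEnd_apply_apply, hw k hk, ← Nat.cast_pow, ← natCast_mod_five,
    ← natCast_mod_five (w k), Nat.pow_mod]
  have : w k % 5 < 5 := Nat.mod_lt _ (by norm_num)
  interval_cases w k % 5 <;> rfl

lemma actsTorally_torusOne : ActsTorally F (MelikianAlgebra F) 5 (torusOne (F := F)) :=
  actsTorally_of_lie_e fun _ => lie_torusOne_e

lemma actsTorally_torusTwo : ActsTorally F (MelikianAlgebra F) 5 (torusTwo (F := F)) :=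
  actsTorally_of_lie_e fun _ => lie_torusTwo_e

lemma modEq_of_coordAt_ne_zero {h v : MelikianAlgebra F} {w : ℕ → ℕ} {n k : ℕ}
    (hw : ∀ k < 125, ⁅h, (e k : MelikianAlgebra F)⁆ = (w k : F) • (e k : MelikianAlgebra F))
    (hv : ⁅h, v⁆ = (n : F) • v) (hk : k < 125) (hne : coordAt k v ≠ 0) : w k ≡ n [MOD 5] := by
  have hcoord : coordAt k ∘ₗ LieModule.toEnd F _ (MelikianAlgebra F) h = (w k : F) • coordAt k := by
    refine linearMap_ext_e fun j hj => ?_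
    simp only [LinearMap.comp_apply, LieModule.toEnd_apply_apply, hw j hj, LinearMap.smul_apply,
      map_smul, coordAt_e hk, smul_eq_mul]
    split_ifs with hjk
    · rw [hjk]
    · simp only [mul_zero]
  have key := LinearMap.congr_fun hcoord v
  rw [LinearMap.comp_apply, LieModule.toEnd_apply_apply, hv, map_smul] at key
  exact ((CharP.cast_eq_iff_mod_eq F 5).1 (mul_right_cancel₀ hne key)).symm

/-- The vector `v` has the weight `(w₁, w₂)` under the torus spanned by `x₁D₁` and `x₂D₂`. -/
def HasWeight (v : MelikianAlgebra F) (w₁ w₂ : ℕ) : Prop :=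
  ⁅(torusOne : MelikianAlgebra F), v⁆ = (w₁ : F) • v ∧
    ⁅(torusTwo : MelikianAlgebra F), v⁆ = (w₂ : F) • v

lemma hasWeight_e {k : ℕ} (hk : k < 125) :
    HasWeight (e k : MelikianAlgebra F) (weightOne k) (weightTwo k) :=
  ⟨lie_torusOne_e hk, lie_torusTwo_e hk⟩

lemma hasWeight_e_codeOfWeight (w₁ w₂ : ℕ) {s : ℕ} (hs : s < 5) :
    HasWeight (e (codeOfWeight w₁ w₂ s) : MelikianAlgebra F) w₁ w₂ := by
  have key := hasWeight_e (F := F) (codeOfWeight_lt w₁ w₂ hs)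
  have h₁ : weightOne (codeOfWeight w₁ w₂ s) % 5 = w₁ % 5 := by
    have hshift : weightOne.shift s ≤ 4 := by unfold weightOne.shift; omega
    rw [weightOne, codeOfWeight_mod_five _ _ hs, codeOfWeight]
    omega
  have h₂ : weightTwo (codeOfWeight w₁ w₂ s) % 5 = w₂ % 5 := by
    have hshift : weightTwo.shift s ≤ 4 := by unfold weightTwo.shift; split <;> omega
    rw [weightTwo, codeOfWeight_mod_five _ _ hs, codeOfWeight]
    omega
  rwa [HasWeight, ← natCast_mod_five, h₁, natCast_mod_five, ← natCast_mod_five (weightTwo _), h₂,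
    natCast_mod_five] at key

/-- Each pair of weights occurs exactly once in each of the five summands. -/
lemma HasWeight.eq_sum {v : MelikianAlgebra F} {w₁ w₂ : ℕ} (h : HasWeight v w₁ w₂) :
    v = ∑ s ∈ Finset.range 5, coordAt (codeOfWeight w₁ w₂ s) v •
      (e (codeOfWeight w₁ w₂ s) : MelikianAlgebra F) := by
  refine ext_coordAt fun k hk => ?_
  simp only [map_sum, map_smul, coordAt_e hk, smul_eq_mul, mul_ite, mul_one, mul_zero]
  have hs : k % 5 < 5 := Nat.mod_lt _ (by norm_num)
  rw [Finset.sum_eq_single_of_mem (k % 5) (Finset.mem_range.2 hs) fun s hs' hne =>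
    if_neg fun hc => hne (by rw [← hc, codeOfWeight_mod_five _ _ (Finset.mem_range.1 hs')])]
  split_ifs with hc
  · rw [hc]
  · by_contra hne
    exact hc (codeOfWeight_eq hk (modEq_of_coordAt_ne_zero (fun _ => lie_torusOne_e) h.1 hk hne)
      (modEq_of_coordAt_ne_zero (fun _ => lie_torusTwo_e) h.2 hk hne))

end Weights

section UnitPropagation

/-- `strict n f = f n`. The case distinction forces the kernel to evaluate `n` before it is
substituted into `f`. -/
def strict {α : Sort*} (n : ℕ) (f : ℕ → α) : α :=
  Nat.casesOn n (f 0) fun n => f n.succ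

lemma strict_eq {α : Sort*} (n : ℕ) (f : ℕ → α) : strict n f = f n := by
  cases n <;> rfl

/-- A left fold over a list with a strictly evaluated state. -/
def strictFold {α : Type*} (step : ℕ → α → ℕ) : List α → ℕ → ℕ
  | [], known => known
  | a :: l, known => strict (step known a) (strictFold step l)

/-- The unknown `u` is marked in the bit mask `known`. The `64` lowest bits of a mask stand for no
unknown. -/
def isKnown (known u : ℕ) : Bool := Nat.beq ((known >>> (u + 64)) % 2) 1

/-- The five unknowns from `u` on are marked in `known`. -/
def isKnownBlock (known u : ℕ) : Bool := Nat.beq ((known >>> (u + 64)) % 32) 31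

/-- The mask `known` with the unknowns in the list marked in addition. -/
def mark (known : ℕ) (l : List ℕ) : ℕ := l.foldl (fun k u => k ||| 1 <<< (u + 64)) known

/-- The mask `known` with changed `64` lowest bits. The kernel hashes a numeral by these bits, so
that its caches degenerate to linear lists unless the successive masks differ there. -/
def stamp (n known : ℕ) : ℕ := known ^^^ n % 2 ^ 64

/-- A linear form `∑ c X_u`, as a list of pairs `(c, u)`, is a nonzero multiple of a single
unknown modulo `5`. -/
def singleUnknown : List (ℕ × ℕ) → Option ℕ
  | [] => none
  | t :: l =>
    bif l.all (fun t' => Nat.beq t'.2 t.2) && !Nat.beq ((t.1 + (l.map Prod.fst).sum) % 5) 0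
    then some t.2 else none

/-- The unknowns marked in `known` have the value `0`. -/
def VanishesOn {N : Type*} [Zero N] (v : ℕ → N) (known : ℕ) : Prop :=
  ∀ u, isKnown known u = true → v u = 0

lemma isKnown_eq_testBit (known u : ℕ) : isKnown known u = known.testBit (u + 64) := by
  rw [isKnown, Nat.testBit_eq_decide_div_mod_eq, Nat.shiftRight_eq_div_pow, Bool.eq_iff_iff,
    Nat.beq_eq, decide_eq_true_iff]

lemma isKnown_of_isKnownBlock {known u s : ℕ} (h : isKnownBlock known u = true) (hs : s < 5) :
    isKnown known (u + s) = true := by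
  have key := congrArg (Nat.testBit · s) (Nat.eq_of_beq_eq_true h)
  simp only [show (32 : ℕ) = 2 ^ 5 from rfl, Nat.testBit_mod_two_pow, hs, decide_true,
    Bool.true_and, Nat.testBit_shiftRight, show (31 : ℕ) = 2 ^ 5 - 1 from rfl,
    Nat.testBit_two_pow_sub_one] at key
  rwa [isKnown_eq_testBit, add_right_comm]

lemma isKnown_stamp (n known u : ℕ) : isKnown (stamp n known) u = isKnown known u := by
  rw [isKnown_eq_testBit, isKnown_eq_testBit, stamp, Nat.testBit_xor,
    Nat.testBit_lt_two_pow ((Nat.mod_lt n (by positivity)).trans_le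
      (Nat.pow_le_pow_right two_pos (Nat.le_add_left 64 u))), Bool.xor_false]

variable {N : Type*}

lemma VanishesOn.mark [Zero N] {v : ℕ → N} {known : ℕ} (h : VanishesOn v known) {l : List ℕ}
    (hl : ∀ u ∈ l, v u = 0) : VanishesOn v (mark known l) := by
  induction l generalizing known with
  | nil => exact h
  | cons a l ih =>
    refine ih (fun u hu => ?_) fun u hu => hl u (List.mem_cons_of_mem a hu)
    rw [isKnown_eq_testBit, Nat.testBit_or, Bool.or_eq_true, Nat.one_shiftLeft,
      Nat.testBit_two_pow, decide_eq_true_iff, Nat.add_right_cancel_iff] at hu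
    obtain hu | rfl := hu
    · exact h u (isKnown_eq_testBit known u ▸ hu)
    · exact hl a List.mem_cons_self

lemma vanishesOn_mark_zero [Zero N] {v : ℕ → N} {l : List ℕ} (hl : ∀ u ∈ l, v u = 0) :
    VanishesOn v (mark 0 l) := by
  refine VanishesOn.mark (fun u hu => ?_) hl
  rw [isKnown_eq_testBit, Nat.zero_testBit] at hu
  exact absurd hu Bool.false_ne_true

lemma VanishesOn.strictFold [Zero N] {v : ℕ → N} {α : Type*} {step : ℕ → α → ℕ}
    (hstep : ∀ known a, VanishesOn v known → VanishesOn v (step known a)) (l : List α) {known : ℕ}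
    (h : VanishesOn v known) : VanishesOn v (strictFold step l known) := by
  induction l generalizing known with
  | nil => exact h
  | cons a l ih =>
    rw [Melikian.strictFold, strict_eq]
    exact ih (hstep known a h)

variable [CharP F 5] [AddCommGroup N] [Module F N]

lemma eq_zero_of_mem_singleUnknown {v : ℕ → N} {l : List (ℕ × ℕ)} {u : ℕ}
    (hl : (l.map fun t => (t.1 : F) • v t.2).sum = 0) (hu : u ∈ singleUnknown l) : v u = 0 := by
  cases l with
  | nil => cases hu
  | cons t l =>
    rw [singleUnknown, cond_eq_ite] at hu
    split_ifs at hu with h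
    · obtain rfl : t.2 = u := Option.some_inj.1 hu
      rw [Bool.and_eq_true, List.all_eq_true, Bool.not_eq_true', ← Bool.not_eq_true,
        Nat.beq_eq] at h
      have key : ((t.1 + (l.map Prod.fst).sum : ℕ) : F) • v t.2 = 0 := by
        rw [← hl, List.map_cons, List.sum_cons, Nat.cast_add, add_smul]
        congr 1
        rw [List.map_congr_left (g := fun s => (s.1 : F) • v t.2) fun s hs => by
          rw [Nat.eq_of_beq_eq_true (h.1 s hs)], Nat.cast_list_sum, List.sum_smul, List.map_map,
          List.map_map]
        rfl
      refine (smul_eq_zero.1 key).resolve_left fun h0 => h.2 ?_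
      exact Nat.mod_eq_zero_of_dvd ((CharP.cast_eq_zero_iff F 5 _).1 h0)
    · cases hu

end UnitPropagation

section FormalVectors

/-- The vector `∑ c v(u) e k` of a list of triples `(c, u, k)`: a linear combination of the basis
vectors whose coefficients involve the unknown scalars `v`. -/
def evaluate (v : ℕ → F) (l : List (ℕ × ℕ × ℕ)) : MelikianAlgebra F :=
  (l.map fun t => ((t.1 : F) * v t.2.1) • (e t.2.2 : MelikianAlgebra F)).sum

/-- The list of triples of `⁅e x, w⁆`, for the vector `w` with the triples `l`. -/
def lieTerms (x : ℕ) (l : List (ℕ × ℕ × ℕ)) : List (ℕ × ℕ × ℕ) :=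
  l.flatMap fun t => strict t.2.2 fun k =>
    (bracketTerms x k).map fun b => (t.1 * b.1, t.2.1, b.2)

/-- The list of triples of `φ w`, for a linear map `φ` with the triples `image k` at `e k` and the
linear combination `w` of basis vectors given by `l`. -/
def mapTerms (image : ℕ → List (ℕ × ℕ × ℕ)) (l : List (ℕ × ℕ)) : List (ℕ × ℕ × ℕ) :=
  l.flatMap fun b => strict b.2 fun k => (image k).map fun t => (b.1 * t.1, t.2)

/-- The sum of the coordinates in the `s`-th summand, as a linear form in the unknowns. -/
def summandTerms (s : ℕ) (l : List (ℕ × ℕ × ℕ)) : List (ℕ × ℕ) :=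
  l.filterMap fun t =>
    bif Nat.beq (t.2.2 % 5) s && Nat.blt t.2.2 125 then some (t.1, t.2.1) else none

/-- Unknowns which vanish if the vector with the triples `l` is zero. -/
def solvedUnknowns (l : List (ℕ × ℕ × ℕ)) : List ℕ :=
  [0, 1, 2, 3, 4].filterMap fun s => singleUnknown (summandTerms s l)

/-- The sum of the coordinates in the `s`-th summand. -/
noncomputable def summandSum (s : ℕ) : MelikianAlgebra F →ₗ[F] F :=
  monomialBasis.constr F fun k => if (k : ℕ) % 5 = s then 1 else 0

lemma summandSum_e (s k : ℕ) :
    summandSum s (e k : MelikianAlgebra F) = if k % 5 = s ∧ k < 125 then 1 else 0 := by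
  by_cases hk : k < 125
  · rw [← monomialBasis_apply ⟨k, hk⟩, summandSum, Module.Basis.constr_basis]
    simp only [hk, and_true]
  · rw [e_eq_zero (not_lt.1 hk), map_zero, if_neg fun h => hk h.2]

lemma summandSum_evaluate (v : ℕ → F) (s : ℕ) (l : List (ℕ × ℕ × ℕ)) :
    summandSum s (evaluate v l) = ((summandTerms s l).map fun t => (t.1 : F) • v t.2).sum := by
  induction l with
  | nil => exact map_zero _
  | cons t l ih =>
    have hadd : evaluate v (t :: l) =
      ((t.1 : F) * v t.2.1) • (e t.2.2 : MelikianAlgebra F) + evaluate v l := List.sum_cons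
    have hterms : summandTerms s (t :: l) = if t.2.2 % 5 = s ∧ t.2.2 < 125 then
        (t.1, t.2.1) :: summandTerms s l else summandTerms s l := by
      conv_lhs => rw [summandTerms, List.filterMap_cons, cond_eq_ite]
      simp only [Bool.and_eq_true, Nat.beq_eq, Nat.blt_eq]
      split_ifs <;> rfl
    rw [hadd, map_add, map_smul, summandSum_e, ih, hterms]
    split_ifs
    · rw [smul_eq_mul, mul_one]
      rfl
    · rw [smul_zero, zero_add]

lemma evaluate_append (v : ℕ → F) (l l' : List (ℕ × ℕ × ℕ)) :
    evaluate v (l ++ l') = evaluate v l + evaluate v l' := by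
  rw [evaluate, List.map_append, List.sum_append]
  rfl

lemma evaluate_flatMap {α : Type*} (v : ℕ → F) (g : α → List (ℕ × ℕ × ℕ)) (l : List α) :
    evaluate v (l.flatMap g) = (l.map fun a => evaluate v (g a)).sum := by
  induction l with
  | nil => rfl
  | cons a l ih => rw [List.flatMap_cons, evaluate_append, ih, List.map_cons, List.sum_cons]

lemma evaluate_mapTerms {v : ℕ → F} {image : ℕ → List (ℕ × ℕ × ℕ)}
    {φ : MelikianAlgebra F →ₗ[F] MelikianAlgebra F} {l : List (ℕ × ℕ)}
    (h : ∀ b ∈ l, evaluate v (image b.2) = φ (e b.2)) :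
    evaluate v (mapTerms image l) = φ (combination l) := by
  rw [mapTerms, evaluate_flatMap, combination, map_list_sum, List.map_map]
  refine congrArg List.sum (List.map_congr_left fun b hb => ?_)
  rw [strict_eq, Function.comp_apply, map_smul, ← h b hb, evaluate, evaluate, List.smul_sum,
    List.map_map, List.map_map]
  refine congrArg List.sum (List.map_congr_left fun t _ => ?_)
  simp only [Function.comp_apply, smul_smul, Nat.cast_mul, mul_assoc]

variable [CharP F 5]

lemma eq_zero_of_mem_solvedUnknowns {v : ℕ → F} {l : List (ℕ × ℕ × ℕ)} (hl : evaluate v l = 0)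
    {u : ℕ} (hu : u ∈ solvedUnknowns l) : v u = 0 := by
  obtain ⟨s, -, hs⟩ := List.mem_filterMap.1 hu
  exact eq_zero_of_mem_singleUnknown (by rw [← summandSum_evaluate, hl, map_zero]) hs

lemma evaluate_lieTerms (v : ℕ → F) (x : ℕ) (l : List (ℕ × ℕ × ℕ)) :
    evaluate v (lieTerms x l) =
      ⁅(e x : MelikianAlgebra F), (evaluate v l : MelikianAlgebra F)⁆ := by
  rw [lieTerms, evaluate_flatMap, ← LieModule.toEnd_apply_apply F, evaluate, map_list_sum,
    List.map_map]
  refine congrArg List.sum (List.map_congr_left fun t _ => ?_)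
  rw [strict_eq, Function.comp_apply, map_smul, LieModule.toEnd_apply_apply, lie_e, combination,
    evaluate, List.smul_sum, List.map_map, List.map_map]
  refine congrArg List.sum (List.map_congr_left fun b _ => ?_)
  simp only [Function.comp_apply, smul_smul, Nat.cast_mul]
  ring_nf

lemma bracketTerms_lt {x y : ℕ} : ∀ b ∈ bracketTerms x y, b.2 < 125 := by
  have hencode (c : ℕ) {l : List (ℕ × ℕ × ℕ × ℕ)} (hl : ∀ t ∈ l, t.2.1 < 5) :
      ∀ b ∈ bracketTerms.encode c l, b.2 < 125 := by
    intro b hb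
    obtain ⟨t, ht, htb⟩ := List.mem_filterMap.1 hb
    split_ifs at htb with hlt
    have := hl t ht
    rw [← Option.some_inj.1 htb]
    omega
  unfold bracketTerms
  split_ifs
  · exact hencode 1 (bracketTable_summand_lt _ _ _ _)
  · exact hencode 4 (bracketTable_summand_lt _ _ _ _)

end FormalVectors

section WeightVectors

/-- The formal vector of weight `(w₁, w₂)` whose coordinate in the `s`-th summand is `c` times the
unknown `u + s`; the unknowns marked in `known` are dropped. -/
def unknownTerms (known c u w₁ w₂ : ℕ) : List (ℕ × ℕ × ℕ) :=
  bif isKnownBlock known u then [] else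
    strict w₁ fun w₁ => strict w₂ fun w₂ => [0, 1, 2, 3, 4].filterMap fun s =>
      bif isKnown known (u + s) then none else some (c, u + s, codeOfWeight w₁ w₂ s)

lemma evaluate_unknownTerms_eq_sum {v : ℕ → F} {known : ℕ} (h : VanishesOn v known)
    (c u w₁ w₂ : ℕ) :
    evaluate v (unknownTerms known c u w₁ w₂) = (c : F) • ∑ s ∈ Finset.range 5,
      v (u + s) • (e (codeOfWeight w₁ w₂ s) : MelikianAlgebra F) := by
  rw [unknownTerms, cond_eq_ite, strict_eq, strict_eq]
  split_ifs with hu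
  · rw [Finset.sum_eq_zero fun s hs => by
      rw [h _ (isKnown_of_isKnownBlock hu (Finset.mem_range.1 hs)), zero_smul], smul_zero]
    rfl
  · have key (l : List ℕ) : evaluate v (l.filterMap fun s =>
        bif isKnown known (u + s) then none else some (c, u + s, codeOfWeight w₁ w₂ s)) =
        (c : F) •
          (l.map fun s => v (u + s) • (e (codeOfWeight w₁ w₂ s) : MelikianAlgebra F)).sum := by
      induction l with
      | nil => exact (smul_zero _).symm
      | cons s l ih =>
        rw [List.map_cons, List.sum_cons, smul_add, ← ih, List.filterMap_cons, cond_eq_ite]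
        split_ifs with hs
        · rw [h _ hs, zero_smul, smul_zero, zero_add]
        · rw [smul_smul]
          exact List.sum_cons
    exact key [0, 1, 2, 3, 4]

variable [CharP F 5]

lemma HasWeight.summandSum {x : MelikianAlgebra F} {w₁ w₂ : ℕ} (h : HasWeight x w₁ w₂) {s : ℕ}
    (hs : s < 5) : Melikian.summandSum s x = coordAt (codeOfWeight w₁ w₂ s) x := by
  conv_lhs => rw [h.eq_sum]
  simp only [map_sum, map_smul, summandSum_e, smul_eq_mul, mul_ite, mul_one, mul_zero]
  rw [Finset.sum_eq_single_of_mem s (Finset.mem_range.2 hs)]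
  · rw [if_pos ⟨codeOfWeight_mod_five _ _ hs, codeOfWeight_lt _ _ hs⟩]
  · intro s' hs' hne
    rw [if_neg]
    rw [codeOfWeight_mod_five _ _ (Finset.mem_range.1 hs')]
    exact fun h => hne h.1

lemma HasWeight.evaluate_unknownTerms {v : ℕ → F} {known : ℕ} (h : VanishesOn v known)
    {x : MelikianAlgebra F} {w₁ w₂ : ℕ} (hx : HasWeight x w₁ w₂) (c : ℕ) {u : ℕ}
    (hu : ∀ s < 5, v (u + s) = Melikian.summandSum s x) :
    evaluate v (unknownTerms known c u w₁ w₂) = (c : F) • x := by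
  rw [evaluate_unknownTerms_eq_sum h]
  conv_rhs => rw [hx.eq_sum]
  refine congrArg _ (Finset.sum_congr rfl fun s hs => ?_)
  rw [hu s (Finset.mem_range.1 hs), hx.summandSum (Finset.mem_range.1 hs)]

end WeightVectors

section CocyclePropagation

/-- The formal vector of the value at `(e y, e z)` of a weight-zero cochain, whose coordinate in
the `s`-th summand is the unknown `5 (125 y + z) + s` for `y < z`. -/
def valueTerms (known y z : ℕ) : List (ℕ × ℕ × ℕ) :=
  bif Nat.blt y z then ordered 1 y z else bif Nat.blt z y then ordered 4 z y else []
where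
  ordered (c y z : ℕ) : List (ℕ × ℕ × ℕ) :=
    strict (5 * (125 * y + z)) fun u =>
      unknownTerms known c u (weightOne y + weightOne z) (weightTwo y + weightTwo z)

/-- The formal vector of the cocycle identity at `(e x, e y, e z)`. -/
def cocycleTerms (known x y z : ℕ) : List (ℕ × ℕ × ℕ) :=
  half x y z ++ half y z x ++ half z x y
where
  half (x y z : ℕ) : List (ℕ × ℕ × ℕ) :=
    lieTerms x (valueTerms known y z) ++ mapTerms (valueTerms known z) (bracketTerms x y)

/-- Marks the unknowns which vanish by the cocycle identity at a triple. -/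
def cocycleStep (known : ℕ) (t : Fin 125 × Fin 125 × Fin 125) : ℕ :=
  strict t.1.1 fun x => strict t.2.1.1 fun y => strict t.2.2.1 fun z =>
    mark (stamp (15625 * x + 125 * y + z) known) (solvedUnknowns (cocycleTerms known x y z))

variable [CharP F 5]

/-- The coordinate of a weight-zero cochain which is the unknown `u`. -/
noncomputable def cochainCoord (u : ℕ) :
    twoCochain F (MelikianAlgebra F) (MelikianAlgebra F) →ₗ[F] F :=
  summandSum (u % 5) ∘ₗ LinearMap.applyₗ (e (u / 5 % 125)) ∘ₗ LinearMap.applyₗ (e (u / 625)) ∘ₗ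
    (twoCochain F (MelikianAlgebra F) (MelikianAlgebra F)).subtype

/-- The cocycles which are invariant under the torus spanned by `x₁D₁` and `x₂D₂`. -/
def weightZeroCocycles : Submodule F (twoCochain F (MelikianAlgebra F) (MelikianAlgebra F)) where
  carrier := {f | f ∈ twoCocycle F (MelikianAlgebra F) (MelikianAlgebra F) ∧
    ⁅(torusOne : MelikianAlgebra F), f.1⁆ = 0 ∧ ⁅(torusTwo : MelikianAlgebra F), f.1⁆ = 0}
  add_mem' {f g} hf hg := ⟨add_mem hf.1 hg.1,
    (lie_add ..).trans (by rw [hf.2.1, hg.2.1, add_zero]),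
    (lie_add ..).trans (by rw [hf.2.2, hg.2.2, add_zero])⟩
  zero_mem' := ⟨zero_mem _, lie_zero _, lie_zero _⟩
  smul_mem' c f hf := ⟨Submodule.smul_mem _ c hf.1,
    (lie_smul ..).trans (by rw [hf.2.1, smul_zero]),
    (lie_smul ..).trans (by rw [hf.2.2, smul_zero])⟩

lemma lie_apply_eq_smul {f : twoCochain F (MelikianAlgebra F) (MelikianAlgebra F)}
    {h x y : MelikianAlgebra F} {a b : ℕ} (hf : ⁅h, f.1⁆ = 0) (hx : ⁅h, x⁆ = (a : F) • x)
    (hy : ⁅h, y⁆ = (b : F) • y) : ⁅h, f x y⁆ = ((a + b : ℕ) : F) • f x y := by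
  have key := LinearMap.congr_fun₂ hf x y
  simp only [LieHom.lie_apply, LinearMap.sub_apply, twoCochain_val_apply, hx, hy, map_smul,
    LinearMap.smul_apply, LinearMap.zero_apply] at key
  rw [Nat.cast_add, add_smul, ← sub_eq_zero, ← key]
  abel

variable {f : twoCochain F (MelikianAlgebra F) (MelikianAlgebra F)}

lemma hasWeight_apply (hf : f ∈ weightZeroCocycles) {y z : ℕ} (hy : y < 125) (hz : z < 125) :
    HasWeight (f (e y) (e z)) (weightOne y + weightOne z) (weightTwo y + weightTwo z) :=
  ⟨lie_apply_eq_smul hf.2.1 (lie_torusOne_e hy) (lie_torusOne_e hz),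
    lie_apply_eq_smul hf.2.2 (lie_torusTwo_e hy) (lie_torusTwo_e hz)⟩

lemma evaluate_valueTerms_ordered (hf : f ∈ weightZeroCocycles) {known : ℕ}
    (h : VanishesOn (cochainCoord · f) known) (c : ℕ) {y z : ℕ} (hy : y < 125) (hz : z < 125) :
    evaluate (cochainCoord · f) (valueTerms.ordered known c y z) = (c : F) • f (e y) (e z) := by
  rw [valueTerms.ordered, strict_eq]
  refine (hasWeight_apply hf hy hz).evaluate_unknownTerms h c fun s hs => ?_
  change summandSum _ (f (e (_ / 625)) (e (_ / 5 % 125))) = _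
  rw [show (5 * (125 * y + z) + s) % 5 = s by omega,
    show (5 * (125 * y + z) + s) / 625 = y by omega,
    show (5 * (125 * y + z) + s) / 5 % 125 = z by omega]

lemma evaluate_valueTerms (hf : f ∈ weightZeroCocycles) {known : ℕ}
    (h : VanishesOn (cochainCoord · f) known) {y z : ℕ} (hy : y < 125) (hz : z < 125) :
    evaluate (cochainCoord · f) (valueTerms known y z) = f (e y) (e z) := by
  simp only [valueTerms, cond_eq_ite, Nat.blt_eq]
  split_ifs with hyz hzy
  · rw [evaluate_valueTerms_ordered hf h 1 hy hz, Nat.cast_one, one_smul]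
  · have h5 : (5 : F) = 0 := CharP.cast_eq_zero F 5
    have h4 : ((4 : ℕ) : F) = -1 := by push_cast; linear_combination h5
    rw [evaluate_valueTerms_ordered hf h 4 hz hy, h4, neg_smul, one_smul, twoCochain_skew]
  · obtain rfl : y = z := by omega
    exact (twoCochain_alt f (e y)).symm

lemma evaluate_cocycleTerms (hf : f ∈ weightZeroCocycles) {known : ℕ}
    (h : VanishesOn (cochainCoord · f) known) {x y z : ℕ} (hx : x < 125) (hy : y < 125)
    (hz : z < 125) : evaluate (cochainCoord · f) (cocycleTerms known x y z) = 0 := by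
  have half {x y z : ℕ} (hy : y < 125) (hz : z < 125) :
      evaluate (cochainCoord · f) (cocycleTerms.half known x y z) =
        ⁅(e x : MelikianAlgebra F), f (e y) (e z)⁆ + f (e z) ⁅(e x : MelikianAlgebra F), e y⁆ := by
    have himage := fun b (hb : b ∈ bracketTerms x y) =>
      evaluate_valueTerms hf h hz (bracketTerms_lt b hb)
    rw [cocycleTerms.half, evaluate_append, evaluate_lieTerms, evaluate_valueTerms hf h hy hz,
      evaluate_mapTerms himage, lie_e]
  rw [cocycleTerms, evaluate_append, evaluate_append, half hy hz, half hz hx, half hx hy]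
  exact mem_twoCocycle_iff_cyclic.1 hf.1 (e x) (e y) (e z)

lemma vanishesOn_cocycleStep (hf : f ∈ weightZeroCocycles) (known : ℕ)
    (t : Fin 125 × Fin 125 × Fin 125) (h : VanishesOn (cochainCoord · f) known) :
    VanishesOn (cochainCoord · f) (cocycleStep known t) := by
  rw [cocycleStep, strict_eq, strict_eq, strict_eq]
  refine VanishesOn.mark (fun u hu => h u (isKnown_stamp _ known u ▸ hu)) fun u hu => ?_
  exact eq_zero_of_mem_solvedUnknowns (evaluate_cocycleTerms hf h t.1.2 t.2.1.2 t.2.2.2) hu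

end CocyclePropagation

section Generation

/-- The three elements `D̃₁`, `D̃₂` and `x₁x₂D₁`, which generate the Melikian algebra. -/
def generators : List ℕ := [0, 1, 33]

lemma lt_of_mem_generators {g : ℕ} (hg : g ∈ generators) : g < 125 := by
  revert g
  decide

/-- Marks the basis vectors which lie in a subalgebra containing the generators because the marked
ones do, by bracketing `e y` with the generators. -/
def generationStep (known y : ℕ) : ℕ :=
  bif isKnown known y then
    mark known (generators.filterMap fun g =>
      singleUnknown ((bracketTerms g y).filter fun t => !isKnown known t.2))
  else known

variable [CharP F 5]

lemma vanishesOn_generationStep {N : Type*} [AddCommGroup N] [Module F N]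
    {π : MelikianAlgebra F →ₗ[F] N}
    (hπ : ∀ g ∈ generators, ∀ y, π (e y) = 0 → π ⁅(e g : MelikianAlgebra F), e y⁆ = 0)
    (known y : ℕ) (h : VanishesOn (fun k => π (e k)) known) :
    VanishesOn (fun k => π (e k)) (generationStep known y) := by
  rw [generationStep, cond_eq_ite]
  split_ifs with hy
  · refine h.mark fun u hu => ?_
    obtain ⟨g, hg, hu⟩ := List.mem_filterMap.1 hu
    have hfilter (l : List (ℕ × ℕ)) :
        ((l.filter fun t => !isKnown known t.2).map fun t => (t.1 : F) • π (e t.2)).sum =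
          π (combination l) := by
      induction l with
      | nil => exact (map_zero π).symm
      | cons t l ih =>
        rw [combination, List.map_cons, List.sum_cons, map_add, map_smul, ← combination, ← ih,
          List.filter_cons]
        cases ht : isKnown known t.2
        · exact List.sum_cons
        · rw [show π (e t.2) = 0 from h t.2 ht, smul_zero, zero_add]
          rfl
    exact eq_zero_of_mem_singleUnknown (v := fun k => π (e k))
      (by rw [hfilter, ← lie_e, hπ g hg y (h y hy)]) hu
  · exact h

lemma lieSpan_generators :
    LieSubalgebra.lieSpan F (MelikianAlgebra F) {x | ∃ g ∈ generators, x = e g} = ⊤ := by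
  set S := LieSubalgebra.lieSpan F (MelikianAlgebra F) {x | ∃ g ∈ generators, x = e g}
  have hgen (g) (hg : g ∈ generators) : (e g : MelikianAlgebra F) ∈ S :=
    LieSubalgebra.subset_lieSpan ⟨g, hg, rfl⟩
  have hmem (x : MelikianAlgebra F) : S.toSubmodule.mkQ x = 0 ↔ x ∈ S :=
    Submodule.Quotient.mk_eq_zero S.toSubmodule
  let sweeps := (List.replicate 6 (List.range 125)).flatten
  have key : VanishesOn (fun k => S.toSubmodule.mkQ (e k))
      (strictFold generationStep sweeps (mark 0 generators)) := by
    refine VanishesOn.strictFold (vanishesOn_generationStep fun g hg y hy => ?_) _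
      (vanishesOn_mark_zero fun g hg => (hmem _).2 (hgen g hg))
    exact (hmem _).2 (S.lie_mem (hgen g hg) ((hmem _).1 hy))
  have hknown : ∀ k < 125,
      isKnown (strictFold generationStep sweeps (mark 0 generators)) k = true := by
    decide +kernel
  rw [← LieSubalgebra.toSubmodule_eq_top, ← Submodule.ker_mkQ S.toSubmodule, LinearMap.ker_eq_top]
  exact linearMap_ext_e fun k hk => key k (hknown k hk)

end Generation

section GaugeCoordinates

/-- The degree of `e k` in the `ℤ`-grading of the Melikian algebra, increased by `3`. -/
def degree (k : ℕ) : ℕ :=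
  3 * (k / 25 + k / 5 % 5) + shift (k % 5)
where
  shift (s : ℕ) : ℕ :=
    match s with
    | 0 | 1 => 2
    | 2 => 1
    | _ => 0

/-- The codes of the basis vectors, sorted by degree. -/
def degreeOrder : List (Fin 125) :=
  (List.range 27).flatMap fun d => (List.finRange 125).filter fun k => Nat.beq (degree k) d

/-- The triples `(x, y, z)` with `(x, y)` in `pairs`, for one `z` in `zs` after the other. -/
def sweep (pairs : List (Fin 125 × Fin 125)) (zs : List (Fin 125)) :
    List (Fin 125 × Fin 125 × Fin 125) :=
  zs.flatMap fun z => pairs.map fun p => (p.1, p.2, z)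

/-- Triples at which the cocycle identity is to be used, found by a randomized computer search. -/
def cocycleSchedule : List (Fin 125 × Fin 125 × Fin 125) :=
  sweep [(0, 3), (1, 3), (0, 4), (1, 4), (4, 8), (4, 28), (4, 25), (1, 2), (0, 1), (0, 8), (0, 9),
    (0, 28), (0, 29), (0, 27), (1, 8), (1, 9), (1, 28), (1, 7), (1, 6), (8, 28), (5, 14)]
    degreeOrder ++
  sweep [(3, 4), (4, 27), (0, 2), (1, 2), (2, 8), (0, 1), (0, 27), (0, 25), (0, 26), (0, 54),
    (1, 7), (1, 5), (1, 26), (1, 14), (8, 25), (5, 29)]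
    degreeOrder.reverse ++
  sweep [(0, 3), (1, 3), (3, 7), (3, 5), (3, 26), (1, 4), (4, 8), (4, 5), (4, 14), (4, 33), (4, 54),
    (4, 26), (0, 7), (0, 27), (0, 5), (0, 6), (0, 25), (0, 14), (1, 26), (0, 33), (1, 5), (1, 6),
    (1, 25), (1, 14), (1, 33), (8, 26), (6, 29), (7, 25), (3, 33)]
    degreeOrder

/-- Coordinates which determine a weight-zero cocycle: some coordinates of its values at
`(D̃₁, e z)` and at `(D̃₂, e z)`, given by a bit mask in blocks of `160` bits, and the
`D₁`-coordinates of its values at the pairs `(5, 113)`, `(8, 48)` and `(29, 108)` of codes. -/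
def gaugeUnknowns : List ℕ :=
  block 0 707176120914164861791592277536396996424750841312 ++
  block 1 705037340008865332964912846729645944397916257727 ++
  block 2 615834269443998282256841031115615322498185756143 ++
  block 3 730794700774977306339441779499123660578480438765 ++
  block 4 182916466980555233019344386286810832767033675913 ++
  block 5 234252609732937093871353220785828975012908896396 ++
  block 6 554046862539888685177793439898944038749499166848 ++
  block 7 218164946430969911585614073974340325396 ++
  [(5, 113), (8, 48), (29, 108)].map fun p => 5 * (125 * p.1 + p.2) + 3
where
  block (n mask : ℕ) : List ℕ :=
    (List.range 160).filterMap fun i => if mask.testBit i then some (160 * n + i) else none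

lemma length_gaugeUnknowns : gaugeUnknowns.length = 625 := by
  decide +kernel

/-- A mask of vanishing coordinates forces a weight-zero cocycle to vanish on the generators. -/
def vanishesAtGenerators (known : ℕ) : Bool :=
  generators.all fun y => (List.range 125).all fun z => (valueTerms known y z).isEmpty

set_option maxRecDepth 100000 in
lemma vanishesAtGenerators_cocycleSchedule :
    strict (strictFold cocycleStep cocycleSchedule (mark 0 gaugeUnknowns))
      vanishesAtGenerators = true := by
  decide +kernel

variable [CharP F 5]

lemma eq_zero_of_vanishesAtGenerators
    {f : twoCochain F (MelikianAlgebra F) (MelikianAlgebra F)} (hf : f ∈ weightZeroCocycles)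
    {known : ℕ} (h : VanishesOn (cochainCoord · f) known)
    (hknown : vanishesAtGenerators known = true) : f = 0 := by
  refine eq_zero_of_lieSpan_eq_top hf.1 lieSpan_generators ?_
  rintro _ ⟨g, hg, rfl⟩ y
  suffices f.1 (e g) = 0 from LinearMap.congr_fun this y
  refine linearMap_ext_e fun z hz => ?_
  have key := List.all_eq_true.1 (List.all_eq_true.1 hknown g hg) z (List.mem_range.2 hz)
  rw [twoCochain_val_apply, ← evaluate_valueTerms hf h (lt_of_mem_generators hg) hz,
    List.isEmpty_iff.1 key]
  rfl

lemma eq_zero_of_gaugeUnknowns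
    {f : twoCochain F (MelikianAlgebra F) (MelikianAlgebra F)} (hf : f ∈ weightZeroCocycles)
    (h : ∀ u ∈ gaugeUnknowns, cochainCoord u f = 0) : f = 0 := by
  have hknown := VanishesOn.strictFold (vanishesOn_cocycleStep hf) cocycleSchedule
    (vanishesOn_mark_zero h)
  exact eq_zero_of_vanishesAtGenerators hf hknown
    ((strict_eq _ _).symm.trans vanishesAtGenerators_cocycleSchedule)

end GaugeCoordinates

section DerivationPropagation

/-- The formal vector of the value at `(e x, e y)` of the coboundary of a weight-zero linear map,
whose coordinate at `e k` in the `s`-th summand is the unknown `5 k + s`. -/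
def coboundaryTerms (known x y : ℕ) : List (ℕ × ℕ × ℕ) :=
  lieTerms x (image 1 y) ++ lieTerms y (image 4 x) ++ mapTerms (image 4) (bracketTerms x y)
where
  image (c k : ℕ) : List (ℕ × ℕ × ℕ) :=
    strict (5 * k) fun u => unknownTerms known c u (weightOne k) (weightTwo k)

/-- Marks the unknowns which vanish by the derivation property at a pair. -/
def derivationStep (known : ℕ) (t : Fin 125 × Fin 125) : ℕ :=
  strict t.1.1 fun x => strict t.2.1 fun y =>
    mark known (solvedUnknowns (coboundaryTerms known x y))

/-- Pairs at which the derivation property is to be used. -/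
def derivationSchedule : List (Fin 125 × Fin 125) :=
  degreeOrder.flatMap fun y => [(0, y), (1, y)]

/-- Coordinates of the values at `D̃₁` and `D̃₂` which determine a weight-zero derivation. -/
def derivationGauge : List ℕ := [0, 2, 3, 6, 7]

/-- A mask of vanishing coordinates forces a weight-zero derivation to vanish on the generators. -/
def imageVanishesAtGenerators (known : ℕ) : Bool :=
  generators.all fun y => (coboundaryTerms.image known 1 y).isEmpty

lemma imageVanishesAtGenerators_derivationSchedule :
    strict (strictFold derivationStep derivationSchedule (mark 0 derivationGauge))
      imageVanishesAtGenerators = true := by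
  decide +kernel

variable [CharP F 5]

/-- The coordinate of a weight-zero linear map which is the unknown `u`. -/
noncomputable def mapCoord (u : ℕ) :
    oneCochain F (MelikianAlgebra F) (MelikianAlgebra F) →ₗ[F] F :=
  summandSum (u % 5) ∘ₗ LinearMap.applyₗ (e (u / 5))

/-- The linear maps which are invariant under the torus spanned by `x₁D₁` and `x₂D₂`. -/
def IsWeightZero (φ : oneCochain F (MelikianAlgebra F) (MelikianAlgebra F)) : Prop :=
  ⁅(torusOne : MelikianAlgebra F), φ⁆ = 0 ∧ ⁅(torusTwo : MelikianAlgebra F), φ⁆ = 0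

variable {φ : oneCochain F (MelikianAlgebra F) (MelikianAlgebra F)}

lemma lie_eq_zero_iff_e {h : MelikianAlgebra F} {w : ℕ → ℕ}
    (hw : ∀ k < 125, ⁅h, (e k : MelikianAlgebra F)⁆ = (w k : F) • (e k : MelikianAlgebra F)) :
    ⁅h, φ⁆ = 0 ↔ ∀ k < 125, ⁅h, φ (e k)⁆ = (w k : F) • φ (e k) := by
  have key (k) (hk : k < 125) : ⁅h, φ⁆ (e k) = ⁅h, φ (e k)⁆ - (w k : F) • φ (e k) := by
    rw [LieHom.lie_apply, hw k hk, map_smul]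
  refine ⟨fun hφ k hk => ?_, fun hφ => linearMap_ext_e fun k hk => ?_⟩
  · rw [← sub_eq_zero, ← key k hk, hφ, LinearMap.zero_apply]
  · rw [key k hk, hφ k hk, sub_self, LinearMap.zero_apply]

lemma isWeightZero_iff_hasWeight :
    IsWeightZero φ ↔ ∀ k < 125, HasWeight (φ (e k)) (weightOne k) (weightTwo k) := by
  rw [IsWeightZero, lie_eq_zero_iff_e fun _ => lie_torusOne_e,
    lie_eq_zero_iff_e fun _ => lie_torusTwo_e]
  exact ⟨fun h k hk => ⟨h.1 k hk, h.2 k hk⟩,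
    fun h => ⟨fun k hk => (h k hk).1, fun k hk => (h k hk).2⟩⟩

lemma IsWeightZero.evaluate_image (hφ : IsWeightZero φ) {known : ℕ}
    (h : VanishesOn (mapCoord · φ) known) (c : ℕ) {k : ℕ} (hk : k < 125) :
    evaluate (mapCoord · φ) (coboundaryTerms.image known c k) = (c : F) • φ (e k) := by
  rw [coboundaryTerms.image, strict_eq]
  refine (isWeightZero_iff_hasWeight.1 hφ k hk).evaluate_unknownTerms h c fun s hs => ?_
  change summandSum _ (φ (e _)) = _
  rw [show (5 * k + s) % 5 = s by omega, show (5 * k + s) / 5 = k by omega]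

lemma IsWeightZero.evaluate_coboundaryTerms (hφ : IsWeightZero φ) {known : ℕ}
    (h : VanishesOn (mapCoord · φ) known) {x y : ℕ} (hx : x < 125) (hy : y < 125) :
    evaluate (mapCoord · φ) (coboundaryTerms known x y) = d₁₂ F _ _ φ (e x) (e y) := by
  have h5 : (5 : F) = 0 := CharP.cast_eq_zero F 5
  have h4 : ((4 : ℕ) : F) = -1 := by push_cast; linear_combination h5
  have himage (b) (hb : b ∈ bracketTerms x y) :
      evaluate (mapCoord · φ) (coboundaryTerms.image known 4 b.2) = (-φ) (e b.2) := by
    rw [hφ.evaluate_image h 4 (bracketTerms_lt b hb), h4, neg_smul, one_smul, LinearMap.neg_apply]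
  rw [coboundaryTerms, evaluate_append, evaluate_append, evaluate_lieTerms, evaluate_lieTerms,
    evaluate_mapTerms himage, hφ.evaluate_image h 1 hy, hφ.evaluate_image h 4 hx, ← lie_e, h4,
    Nat.cast_one, one_smul, neg_smul, one_smul, lie_neg, LinearMap.neg_apply, d₁₂_apply_apply,
    sub_eq_add_neg, sub_eq_add_neg]

lemma IsWeightZero.vanishesOn_derivationStep (hφ : IsWeightZero φ) (hd : d₁₂ F _ _ φ = 0)
    (known : ℕ) (t : Fin 125 × Fin 125) (h : VanishesOn (mapCoord · φ) known) :
    VanishesOn (mapCoord · φ) (derivationStep known t) := by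
  rw [derivationStep, strict_eq, strict_eq]
  refine h.mark fun u hu => eq_zero_of_mem_solvedUnknowns (v := fun u => mapCoord u φ) ?_ hu
  rw [hφ.evaluate_coboundaryTerms h t.1.2 t.2.2, hd]
  rfl

lemma IsWeightZero.eq_zero_of_derivationGauge (hφ : IsWeightZero φ) (hd : d₁₂ F _ _ φ = 0)
    (h : ∀ u ∈ derivationGauge, mapCoord u φ = 0) : φ = 0 := by
  have hknown := VanishesOn.strictFold (hφ.vanishesOn_derivationStep hd) derivationSchedule
    (vanishesOn_mark_zero h)
  have hcheck := (strict_eq _ _).symm.trans imageVanishesAtGenerators_derivationSchedule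
  refine eq_zero_of_d₁₂_eq_zero hd lieSpan_generators ?_
  rintro _ ⟨g, hg, rfl⟩
  have hempty := List.isEmpty_iff.1 (List.all_eq_true.1 hcheck g hg)
  have key := hφ.evaluate_image hknown 1 (lt_of_mem_generators hg)
  rw [hempty, Nat.cast_one, one_smul] at key
  exact key.symm

end DerivationPropagation

section WeightZeroMaps

/-- The weight-zero linear maps, with the coordinate of the image of `e k` in the summand `s` as
the parameter at `(k, s)`. -/
noncomputable def weightZeroMap [CharP F 5] :
    (Fin 125 × Fin 5 → F) →ₗ[F] oneCochain F (MelikianAlgebra F) (MelikianAlgebra F) :=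
  (monomialBasis.constr F).toLinearMap ∘ₗ LinearMap.pi fun k => ∑ s : Fin 5,
    (LinearMap.proj (k, s)).smulRight (e (codeOfWeight (weightOne k) (weightTwo k) s))

variable [CharP F 5]

lemma weightZeroMap_e (g : Fin 125 × Fin 5 → F) (k : Fin 125) :
    weightZeroMap g (e k) =
      ∑ s : Fin 5, g (k, s) • (e (codeOfWeight (weightOne k) (weightTwo k) s) :
        MelikianAlgebra F) := by
  rw [← monomialBasis_apply, weightZeroMap, LinearMap.comp_apply, LinearEquiv.coe_coe,
    Module.Basis.constr_basis, LinearMap.pi_apply, LinearMap.sum_apply]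
  rfl

lemma weightZeroMap_injective : Function.Injective (weightZeroMap (F := F)) := by
  refine (injective_iff_map_eq_zero _).2 fun g hg => funext fun ⟨k, s⟩ => ?_
  have key := weightZeroMap_e g k
  rw [hg, LinearMap.zero_apply] at key
  have hcoord := congrArg (summandSum s) key
  simp only [map_sum, map_smul, map_zero, summandSum_e, codeOfWeight_mod_five _ _ (Fin.is_lt _),
    codeOfWeight_lt _ _ (Fin.is_lt _), and_true, Fin.val_inj, smul_eq_mul, mul_ite, mul_one,
    mul_zero, Finset.sum_ite_eq', Finset.mem_univ, if_true] at hcoord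
  exact hcoord.symm

lemma isWeightZero_weightZeroMap (g : Fin 125 × Fin 5 → F) : IsWeightZero (weightZeroMap g) := by
  refine isWeightZero_iff_hasWeight.2 fun k hk => ?_
  rw [weightZeroMap_e g ⟨k, hk⟩]
  have hweight (s : Fin 5) := hasWeight_e_codeOfWeight (F := F) (weightOne k) (weightTwo k) s.2
  constructor
  · rw [lie_sum, Finset.smul_sum]
    exact Finset.sum_congr rfl fun s _ => by rw [lie_smul, (hweight s).1, smul_comm]
  · rw [lie_sum, Finset.smul_sum]
    exact Finset.sum_congr rfl fun s _ => by rw [lie_smul, (hweight s).2, smul_comm]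

lemma IsWeightZero.d₁₂_mem {φ : oneCochain F (MelikianAlgebra F) (MelikianAlgebra F)}
    (hφ : IsWeightZero φ) : d₁₂ F _ _ φ ∈ weightZeroCocycles :=
  ⟨d₁₂_mem_twoCocycle φ, by rw [lie_d₁₂, hφ.1, map_zero]; rfl,
    by rw [lie_d₁₂, hφ.2, map_zero]; rfl⟩

end WeightZeroMaps

section Squarings

/-- The bracket of two linear combinations of basis vectors. -/
def bracketCombination (l l' : List (ℕ × ℕ)) : List (ℕ × ℕ) :=
  l.flatMap fun a => l'.flatMap fun b =>
    (bracketTerms a.2 b.2).map fun t => (a.1 * b.1 * t.1, t.2)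

/-- The value of the squaring of `ad (e k)` at `(e x, e y)`, as a linear combination of basis
vectors; `4, 3, 3, 4` are the inverses of `i! (5 - i)!` modulo `5`. -/
def squaringTerms (k x y : ℕ) : List (ℕ × ℕ) :=
  [(1, 4), (2, 3), (3, 3), (4, 4)].flatMap fun t =>
    bracketCombination ((bracketCombination [(1, k)])^[t.1] [(t.2, x)])
      ((bracketCombination [(1, k)])^[5 - t.1] [(1, y)])

/-- The coefficient of `e w` in a linear combination of basis vectors. -/
def coefficient (w : ℕ) (l : List (ℕ × ℕ)) : ℕ :=
  (l.map fun t => if t.2 = w then t.1 else 0).sum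

/-- The `e w`-coordinate of every coboundary vanishes at `(e x, e y)`. -/
def Separates (x y w : ℕ) : Prop :=
  bracketTerms x y = [] ∧ ∀ z < 125, coefficient w (bracketTerms x z) = 0 ∧
    coefficient w (bracketTerms y z) = 0

instance (x y w : ℕ) : Decidable (Separates x y w) :=
  inferInstanceAs (Decidable (_ ∧ _))

/-- The codes of `1`, `D₁`, `D₂`, `D̃₁` and `D̃₂`. -/
def squaringCode : Fin 5 → ℕ := ![2, 3, 4, 0, 1]

/-- For each of the five squarings, a coordinate `w` of the value at `(e x, e y)` which is nonzero
for this squaring and zero for the other ones and for all coboundaries. -/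
def separator : Fin 5 → ℕ × ℕ × ℕ :=
  ![(12, 34, 3), (27, 100, 3), (7, 20, 3), (12, 84, 15), (7, 13, 1)]

lemma separates_separator (i : Fin 5) :
    Separates (separator i).1 (separator i).2.1 (separator i).2.2 ∧ (separator i).2.2 < 125 := by
  revert i
  decide +kernel

lemma coefficient_squaringTerms_separator (i j : Fin 5) :
    coefficient (separator i).2.2
      (squaringTerms (squaringCode j) (separator i).1 (separator i).2.1) % 5 = 0 ↔ i ≠ j := by
  revert i j
  decide +kernel

lemma squaringCode_lt (i : Fin 5) : squaringCode i < 125 := by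
  revert i
  decide

lemma combination_append (l l' : List (ℕ × ℕ)) :
    (combination (l ++ l') : MelikianAlgebra F) = combination l + combination l' := by
  rw [combination, List.map_append, List.sum_append]
  rfl

lemma combination_flatMap {α : Type*} (g : α → List (ℕ × ℕ)) (l : List α) :
    (combination (l.flatMap g) : MelikianAlgebra F) = (l.map fun a => combination (g a)).sum := by
  induction l with
  | nil => rfl
  | cons a l ih => rw [List.flatMap_cons, combination_append, ih, List.map_cons, List.sum_cons]

lemma combination_singleton (c k : ℕ) :
    (combination [(c, k)] : MelikianAlgebra F) = (c : F) • e k := add_zero _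

lemma coordAt_combination {w : ℕ} (hw : w < 125) (l : List (ℕ × ℕ)) :
    coordAt w (combination l : MelikianAlgebra F) = coefficient w l := by
  rw [combination, coefficient, map_list_sum, List.map_map, Nat.cast_list_sum, List.map_map]
  refine congrArg List.sum (List.map_congr_left fun t _ => ?_)
  simp only [Function.comp_apply, map_smul, coordAt_e hw, smul_eq_mul, mul_ite, mul_one, mul_zero,
    Nat.cast_ite, Nat.cast_zero]

variable [CharP F 5]

lemma combination_bracketCombination (l l' : List (ℕ × ℕ)) :
    (combination (bracketCombination l l') : MelikianAlgebra F) =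
      ⁅(combination l : MelikianAlgebra F), (combination l' : MelikianAlgebra F)⁆ := by
  have hterm (a b : ℕ × ℕ) :
      (combination ((bracketTerms a.2 b.2).map fun t => (a.1 * b.1 * t.1, t.2)) :
        MelikianAlgebra F) = ⁅(a.1 : F) • (e a.2 : MelikianAlgebra F), (b.1 : F) • e b.2⁆ := by
    rw [smul_lie, lie_smul, lie_e, combination, combination, smul_smul, List.smul_sum, List.map_map,
      List.map_map]
    refine congrArg List.sum (List.map_congr_left fun t _ => ?_)
    simp only [Function.comp_apply, smul_smul, Nat.cast_mul]
  have hsum (u : MelikianAlgebra F) : ⁅u, (combination l' : MelikianAlgebra F)⁆ =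
      (l'.map fun b => ⁅u, (b.1 : F) • (e b.2 : MelikianAlgebra F)⁆).sum := by
    rw [combination, ← LieAlgebra.ad_apply F, map_list_sum, List.map_map]
    rfl
  rw [bracketCombination, combination_flatMap, combination, ← lie_skew, ← LieAlgebra.ad_apply F,
    map_list_sum, List.map_map, ← neg_one_smul F, List.smul_sum, List.map_map]
  refine congrArg List.sum (List.map_congr_left fun a _ => ?_)
  simp only [Function.comp_apply, combination_flatMap, hterm]
  rw [LieAlgebra.ad_apply, neg_one_smul, lie_skew, hsum]

/-- The squaring `Sq(ad (e k))`. -/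
noncomputable def squaringAt (k : ℕ) : twoCochain F (MelikianAlgebra F) (MelikianAlgebra F) :=
  squaring (LieDerivation.ad F (MelikianAlgebra F) (e k)) 5

lemma squaringAt_mem_weightZeroCocycles {k : ℕ} (hk : k < 125) :
    squaringAt k ∈ weightZeroCocycles (F := F) :=
  have : Fact (Nat.Prime 5) := ⟨by norm_num⟩
  ⟨squaring_mem_twoCocycle _ 5, lie_squaring_ad_eq_zero 5 (lie_torusOne_e hk),
    lie_squaring_ad_eq_zero 5 (lie_torusTwo_e hk)⟩

lemma squaringAt_apply (k : ℕ) (x y : MelikianAlgebra F) :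
    squaringAt k x y = ∑ i ∈ Finset.Icc 1 4, ((i.factorial * (5 - i).factorial : ℕ) : F)⁻¹ •
      ⁅(⁅(e k : MelikianAlgebra F), ·⁆)^[i] x, (⁅(e k : MelikianAlgebra F), ·⁆)^[5 - i] y⁆ := by
  have : Fact (Nat.Prime 5) := ⟨by norm_num⟩
  have had : ⇑(LieDerivation.ad F (MelikianAlgebra F) (e k)) = (⁅(e k : MelikianAlgebra F), ·⁆) :=
    funext fun z => ad_apply_eq_lie (e k) z
  rw [squaringAt, squaring_apply_eq_sum_Icc, had]

lemma squaringAt_e (k x y : ℕ) :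
    squaringAt k (e x : MelikianAlgebra F) (e y) = combination (squaringTerms k x y) := by
  have hiterate (n c z : ℕ) :
      (combination ((bracketCombination [(1, k)])^[n] [(c, z)]) : MelikianAlgebra F) =
        (c : F) • (⁅(e k : MelikianAlgebra F), ·⁆)^[n] (e z) := by
    induction n with
    | zero => exact combination_singleton c z
    | succ n ih =>
      rw [Function.iterate_succ_apply', Function.iterate_succ_apply',
        combination_bracketCombination, ih, lie_smul, combination_singleton, Nat.cast_one, one_smul]
  have hinv : ∀ t ∈ [(1, 4), (2, 3), (3, 3), (4, 4)],
      (((t.1.factorial * (5 - t.1).factorial : ℕ) : F)⁻¹ = (t.2 : ℕ)) := by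
    intro t ht
    refine inv_eq_of_mul_eq_one_left ?_
    rw [← Nat.cast_mul, ← Nat.cast_one, CharP.cast_eq_iff_mod_eq F 5]
    revert t
    decide
  have hIcc : Finset.Icc 1 4 = ([(1, 4), (2, 3), (3, 3), (4, 4)].map Prod.fst).toFinset := rfl
  rw [squaringAt_apply, squaringTerms, combination_flatMap, hIcc,
    List.sum_toFinset _ (by decide), List.map_map]
  refine congrArg List.sum (List.map_congr_left fun t ht => ?_)
  rw [Function.comp_apply, hinv t ht, combination_bracketCombination, hiterate, hiterate, smul_lie,
    Nat.cast_one, one_smul]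

lemma Separates.coordAt_d₁₂ {x y w : ℕ} (h : Separates x y w) (hw : w < 125)
    (φ : oneCochain F (MelikianAlgebra F) (MelikianAlgebra F)) :
    coordAt w (d₁₂ F _ _ φ (e x) (e y)) = 0 := by
  have hlie {x : ℕ} (hx : ∀ z < 125, coefficient w (bracketTerms x z) = 0)
      (v : MelikianAlgebra F) : coordAt w ⁅(e x : MelikianAlgebra F), v⁆ = 0 := by
    have hzero : coordAt w ∘ₗ LieAlgebra.ad F (MelikianAlgebra F) (e x) = 0 :=
      linearMap_ext_e fun z hz => by
        rw [LinearMap.comp_apply, LieAlgebra.ad_apply, lie_e, coordAt_combination hw, hx z hz,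
          Nat.cast_zero, LinearMap.zero_apply]
    exact LinearMap.congr_fun hzero v
  have hbracket : ⁅(e x : MelikianAlgebra F), (e y : MelikianAlgebra F)⁆ = 0 := by
    rw [lie_e, h.1]
    rfl
  rw [d₁₂_apply_apply, map_sub, map_sub, hlie fun z hz => (h.2 z hz).1,
    hlie fun z hz => (h.2 z hz).2, hbracket, map_zero, map_zero, sub_zero, sub_zero]

lemma eq_zero_of_sum_squaringAt_eq_d₁₂ {c : Fin 5 → F}
    {φ : oneCochain F (MelikianAlgebra F) (MelikianAlgebra F)}
    (h : ∑ i, c i • squaringAt (squaringCode i) = d₁₂ F _ _ φ) : c = 0 := by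
  funext i
  let x := (separator i).1
  let y := (separator i).2.1
  let w := (separator i).2.2
  let coordinate : twoCochain F (MelikianAlgebra F) (MelikianAlgebra F) →ₗ[F] F :=
    coordAt w ∘ₗ LinearMap.applyₗ (e y) ∘ₗ LinearMap.applyₗ (e x) ∘ₗ
      (twoCochain F (MelikianAlgebra F) (MelikianAlgebra F)).subtype
  obtain ⟨hsep, hw⟩ := separates_separator i
  have hsquaring (j : Fin 5) : coordinate (squaringAt (squaringCode j)) =
      coefficient w (squaringTerms (squaringCode j) x y) :=
    (congrArg (coordAt w) (squaringAt_e _ x y)).trans (coordAt_combination hw _)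
  have hzero (j : Fin 5) : coordinate (squaringAt (squaringCode j)) = 0 ↔ i ≠ j := by
    rw [hsquaring, CharP.cast_eq_zero_iff F 5, Nat.dvd_iff_mod_eq_zero]
    exact coefficient_squaringTerms_separator i j
  have hcoboundary : coordinate (d₁₂ F _ _ φ) = 0 := hsep.coordAt_d₁₂ hw φ
  rw [← h, map_sum, Finset.sum_eq_single i
    (fun j _ hj => by rw [map_smul, (hzero j).2 hj.symm, smul_zero])
    fun hi => absurd (Finset.mem_univ i) hi, map_smul] at hcoboundary
  exact (smul_eq_zero.1 hcoboundary).resolve_right fun hi => (hzero i).1 hi rfl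

end Squarings

section Classification

lemma surjective_of_finrank_eq_add {V W A B : Type*} [AddCommGroup V] [Module F V]
    [AddCommMonoid W] [Module F W] [AddCommGroup A] [Module F A] [AddCommGroup B] [Module F B]
    [FiniteDimensional F V] [FiniteDimensional F A] [FiniteDimensional F B]
    {P : V →ₗ[F] W} {ψ : W →ₗ[F] A} {χ : V →ₗ[F] B} (hψ : ∀ w, ψ w = 0 → w = 0)
    (hχ : ∀ v, P v = 0 → χ v = 0 → v = 0)
    (hdim : Module.finrank F V = Module.finrank F A + Module.finrank F B) :
    Function.Surjective P := by
  let : AddCommGroup W := Module.addCommMonoidToAddCommGroup F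
  have hinj : Function.Injective ((ψ ∘ₗ P).prod χ) :=
    (injective_iff_map_eq_zero _).2 fun v hv =>
      hχ v (hψ _ (congrArg Prod.fst hv)) (congrArg Prod.snd hv)
  have hsurj := (LinearMap.injective_iff_surjective_of_finrank_eq_finrank
    (hdim.trans Module.finrank_prod.symm)).1 hinj
  intro w
  obtain ⟨v, hv⟩ := hsurj (ψ w, 0)
  exact ⟨v, (injective_iff_map_eq_zero ψ).2 hψ (congrArg Prod.fst hv)⟩

variable [CharP F 5]

/-- The sum of a linear combination of the five squarings and the coboundary of a weight-zero map,
as a weight-zero cocycle depending linearly on the coefficients and the map. -/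
noncomputable def squaringAddCoboundary :
    (Fin 5 → F) × (Fin 125 × Fin 5 → F) →ₗ[F] weightZeroCocycles (F := F) :=
  LinearMap.codRestrict _
    ((Fintype.linearCombination F fun i => squaringAt (squaringCode i)).coprod
      (d₁₂ F (MelikianAlgebra F) (MelikianAlgebra F) ∘ₗ weightZeroMap))
    fun v => by
      rw [LinearMap.coprod_apply, Fintype.linearCombination_apply, LinearMap.comp_apply]
      exact add_mem (Submodule.sum_mem _ fun i _ => Submodule.smul_mem _ _
        (squaringAt_mem_weightZeroCocycles (squaringCode_lt i)))
        (isWeightZero_weightZeroMap v.2).d₁₂_mem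

lemma coe_squaringAddCoboundary (v : (Fin 5 → F) × (Fin 125 × Fin 5 → F)) :
    (squaringAddCoboundary v : twoCochain F (MelikianAlgebra F) (MelikianAlgebra F)) =
      ∑ i, v.1 i • squaringAt (squaringCode i) + d₁₂ F _ _ (weightZeroMap v.2) := by
  rw [← Fintype.linearCombination_apply F]
  rfl

lemma squaringAddCoboundary_surjective :
    Function.Surjective (squaringAddCoboundary (F := F)) := by
  let gauge : weightZeroCocycles (F := F) →ₗ[F] Fin gaugeUnknowns.length → F :=
    LinearMap.pi fun i => cochainCoord (gaugeUnknowns.get i) ∘ₗ Submodule.subtype _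
  let mapGauge : (Fin 5 → F) × (Fin 125 × Fin 5 → F) →ₗ[F] Fin derivationGauge.length → F :=
    LinearMap.pi fun i => mapCoord (derivationGauge.get i) ∘ₗ weightZeroMap ∘ₗ LinearMap.snd F _ _
  refine surjective_of_finrank_eq_add (ψ := gauge) (χ := mapGauge)
    (fun f hf => Subtype.ext ?_) (fun v hv hgauge => ?_) ?_
  · refine eq_zero_of_gaugeUnknowns f.2 fun u hu => ?_
    obtain ⟨i, rfl⟩ := List.get_of_mem hu
    exact congrFun hf i
  · have hsum : ∑ i, v.1 i • squaringAt (squaringCode i) + d₁₂ F _ _ (weightZeroMap v.2) = 0 := by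
      rw [← coe_squaringAddCoboundary, hv, Submodule.coe_zero]
    have hc : v.1 = 0 := eq_zero_of_sum_squaringAt_eq_d₁₂
      ((eq_neg_of_add_eq_zero_left hsum).trans (map_neg (d₁₂ F _ _) (weightZeroMap v.2)).symm)
    have hd : d₁₂ F _ _ (weightZeroMap v.2) = 0 := by
      simpa only [hc, Pi.zero_apply, zero_smul, Finset.sum_const_zero, zero_add] using hsum
    have hmap : weightZeroMap v.2 = 0 := by
      refine (isWeightZero_weightZeroMap v.2).eq_zero_of_derivationGauge hd fun u hu => ?_
      obtain ⟨i, rfl⟩ := List.get_of_mem hu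
      exact congrFun hgauge i
    exact Prod.ext hc ((map_eq_zero_iff _ weightZeroMap_injective).1 hmap)
  · rw [Module.finrank_prod, Module.finrank_fin_fun, Module.finrank_fin_fun, Module.finrank_fin_fun,
      Module.finrank_fintype_fun_eq_card, length_gaugeUnknowns,
      Fintype.card_prod, Fintype.card_fin, Fintype.card_fin]
    rfl

lemma lie_torusOne_torusTwo :
    ⁅(torusOne : MelikianAlgebra F), (torusTwo : MelikianAlgebra F)⁆ = 0 := by
  have hweight : (weightOne 9 : F) = 0 := (CharP.cast_eq_zero_iff F 5 _).2 (by decide)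
  rw [torusTwo, lie_torusOne_e (by norm_num), hweight, zero_smul]

lemma exists_add_d₁₂_mem_weightZeroCocycles
    {f : twoCochain F (MelikianAlgebra F) (MelikianAlgebra F)} (hf : f ∈ twoCocycle F _ _) :
    ∃ g, f + d₁₂ F _ _ g ∈ weightZeroCocycles := by
  have : Fact (Nat.Prime 5) := ⟨by norm_num⟩
  obtain ⟨g₁, h₁, -⟩ := actsTorally_torusOne.exists_lie_add_d₁₂_eq_zero actsTorally_torusOne hf
  have hf₁ : f + d₁₂ F _ _ g₁ ∈ twoCocycle F _ _ := add_mem hf (d₁₂_mem_twoCocycle g₁)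
  obtain ⟨g₂, h₂, hinvariant⟩ :=
    actsTorally_torusTwo.exists_lie_add_d₁₂_eq_zero actsTorally_torusTwo hf₁
  refine ⟨g₁ + g₂, ?_⟩
  rw [map_add, ← add_assoc]
  exact ⟨add_mem hf₁ (d₁₂_mem_twoCocycle g₂), hinvariant _ lie_torusOne_torusTwo h₁, h₂⟩

lemma exists_eq_sum_squaringAt_add_d₁₂
    {f : twoCochain F (MelikianAlgebra F) (MelikianAlgebra F)} (hf : f ∈ twoCocycle F _ _) :
    ∃ (c : Fin 5 → F) (g : oneCochain F (MelikianAlgebra F) (MelikianAlgebra F)),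
      f = ∑ i, c i • squaringAt (squaringCode i) + d₁₂ F _ _ g := by
  obtain ⟨g, hg⟩ := exists_add_d₁₂_mem_weightZeroCocycles hf
  obtain ⟨v, hv⟩ := squaringAddCoboundary_surjective ⟨_, hg⟩
  refine ⟨v.1, weightZeroMap v.2 + -g, ?_⟩
  rw [map_add, ← add_assoc, ← coe_squaringAddCoboundary, hv, add_assoc, ← map_add, add_neg_cancel,
    map_zero, add_zero]

lemma sum_squaringAt_apply (c : Fin 5 → F) (x y : MelikianAlgebra F) :
    (∑ i, c i • squaringAt (squaringCode i)) x y =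
      (c 0 • melSq (brM oneM) x y + c 1 • melSq (brM (DD 0)) x y + c 2 • melSq (brM (DD 1)) x y
        + c 3 • melSq (brM (TT 0)) x y + c 4 • melSq (brM (TT 1)) x y : Mel F) := by
  have hmelSq (i : Fin 5) (m : Mel F) (hm : (e (squaringCode i) : MelikianAlgebra F) = m) :
      (squaringAt (squaringCode i) x y : MelikianAlgebra F) = melSq (brM m) x y :=
    hm ▸ squaringAt_apply (squaringCode i) x y
  have hX : (X (0, 0) : A F) = mon 0 0 := X_eq_mon (0, 0)
  have hone : (e 2 : MelikianAlgebra F) = (oneM : Mel F) := by rw [oneM, hX]; rfl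
  have hD₁ : (e 3 : MelikianAlgebra F) = (DD 0 : Mel F) := by rw [DD, wOf, hX]; rfl
  have hD₂ : (e 4 : MelikianAlgebra F) = (DD 1 : Mel F) := by rw [DD, wOf, hX]; rfl
  have hT₁ : (e 0 : MelikianAlgebra F) = (TT 0 : Mel F) := by rw [TT, wOf, hX]; rfl
  have hT₂ : (e 1 : MelikianAlgebra F) = (TT 1 : Mel F) := by rw [TT, wOf, hX]; rfl
  let value : twoCochain F (MelikianAlgebra F) (MelikianAlgebra F) →ₗ[F] MelikianAlgebra F :=
    LinearMap.applyₗ y ∘ₗ LinearMap.applyₗ x ∘ₗ Submodule.subtype _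
  have hvalue (f : twoCochain F (MelikianAlgebra F) (MelikianAlgebra F)) : f x y = value f := rfl
  have hsum : (∑ i, c i • squaringAt (squaringCode i)) x y =
      ∑ i, c i • squaringAt (squaringCode i) x y := by
    simp only [hvalue, map_sum, map_smul]
  rw [← hmelSq 0 _ hone, ← hmelSq 1 _ hD₁, ← hmelSq 2 _ hD₂, ← hmelSq 3 _ hT₁, ← hmelSq 4 _ hT₂,
    hsum, Fin.sum_univ_five]
  rfl

end Classification

/-- The second cohomology of the Melikian algebra with values in the adjoint
representation is 5-dimensional:
`H²(M, M) = ⟨Sq(1)⟩ ⊕ ⟨Sq(D₁)⟩ ⊕ ⟨Sq(D₂)⟩ ⊕ ⟨Sq(D̃₁)⟩ ⊕ ⟨Sq(D̃₂)⟩`,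
i.e. every `2`-cocycle is a linear combination of the five squaring cocycles plus a
coboundary, and the five squaring cocycles are linearly independent modulo
coboundaries. -/
theorem melikian_H2 (F : Type*) [Field F] [CharP F 5] :
    (∀ f : Mel F → Mel F → Mel F,
      (∀ y, IsLinearMap F fun x => f x y) → (∀ x, IsLinearMap F (f x)) →
      (∀ x, f x x = 0) →
      (∀ x y z : Mel F,
        brM x (f y z) - brM y (f x z) + brM z (f x y)
          - f (brM x y) z + f (brM x z) y - f (brM y z) x = 0) →
      ∃ (c : Fin 5 → F) (g : Mel F →ₗ[F] Mel F), ∀ x y : Mel F,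
        f x y = c 0 • melSq (brM oneM) x y + c 1 • melSq (brM (DD 0)) x y
          + c 2 • melSq (brM (DD 1)) x y + c 3 • melSq (brM (TT 0)) x y
          + c 4 • melSq (brM (TT 1)) x y + cob g x y) ∧
    (∀ c : Fin 5 → F,
      (∃ g : Mel F →ₗ[F] Mel F, ∀ x y : Mel F,
        c 0 • melSq (brM oneM) x y + c 1 • melSq (brM (DD 0)) x y
          + c 2 • melSq (brM (DD 1)) x y + c 3 • melSq (brM (TT 0)) x y
          + c 4 • melSq (brM (TT 1)) x y = cob g x y) →
      c = 0) := by
  refine ⟨fun f hleft hright halt hcocycle => ?_, fun c ⟨g, hg⟩ => ?_⟩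
  · let cochain : twoCochain F (MelikianAlgebra F) (MelikianAlgebra F) :=
      ⟨LinearMap.mk₂ F f (fun x x' y => (hleft y).map_add x x')
        (fun c x y => (hleft y).map_smul c x) (fun x => (hright x).map_add)
        fun c x => (hright x).map_smul c, halt⟩
    have hcochain : cochain ∈ twoCocycle F (MelikianAlgebra F) (MelikianAlgebra F) :=
      LinearMap.ext fun x => LinearMap.ext₂ fun y z => (d₂₃_apply ..).trans (hcocycle x y z)
    obtain ⟨c, g, hcg⟩ := exists_eq_sum_squaringAt_add_d₁₂ hcochain
    refine ⟨c, g, fun x y => ?_⟩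
    exact (congrArg (fun φ : twoCochain F (MelikianAlgebra F) (MelikianAlgebra F) => φ x y)
      hcg).trans (congrArg (· + cob g x y) (sum_squaringAt_apply c x y))
  · refine eq_zero_of_sum_squaringAt_eq_d₁₂ (φ := g) (Subtype.ext (LinearMap.ext₂ fun x y => ?_))
    exact (sum_squaringAt_apply c x y).trans (hg x y)

end Melikian
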